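/- arXiv:2402.19174 — 2 statements merged into one kernel-verified Lean document; each statement's English description precedes it below -/
import Mathlib

section
/- The composition product sgn₂[sgn_n], the S_{2n}-representation induced from the wreath product S_n ≀ S₂, decomposes into irreducibles as the multiplicity-free direct sum of S^{2^{n−i} 1^{2i}} over all odd i with 1 ≤ i ≤ n. -/
open Finset Equiv

noncomputable section
attribute [local instance] Classical.propDecidable

/-- The group algebra `ℂ[S_N]`.  All representations are over `ℂ`; a left ideal of the
group algebra is an `S_N`-representation via left multiplication. -/
abbrev GA (N : ℕ) := MonoidAlgebra ℂ (Equiv.Perm (Fin N))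

/-- A permutation as an element of the group algebra. -/
def ofP {N : ℕ} (σ : Equiv.Perm (Fin N)) : GA N :=
  MonoidAlgebra.of ℂ (Equiv.Perm (Fin N)) σ

/-- The sign of a permutation, as a complex scalar. -/
def sgnC {n : ℕ} (σ : Equiv.Perm (Fin n)) : ℂ := ((Equiv.Perm.sign σ : ℤ) : ℂ)

/-- The subgroup (as a finset) of permutations preserving the fibers of `h`
(e.g. the row or the column stabilizer of a tableau). -/
def stab {N : ℕ} (h : Fin N → ℕ) : Finset (Equiv.Perm (Fin N)) :=
  Finset.univ.filter (fun σ => ∀ x, h (σ x) = h x)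

/-- The Young symmetrizer of a tableau given by its row and column functions. -/
def youngSym {N : ℕ} (row col : Fin N → ℕ) : GA N :=
  (∑ σ ∈ stab col, sgnC σ • ofP σ) * (∑ σ ∈ stab row, ofP σ)

/-- `f` is a partition of `N`: a weakly decreasing sequence of row lengths, supported on
the first `N` values, with total sum `N`. -/
def IsPartitionN (f : ℕ → ℕ) (N : ℕ) : Prop :=
  Antitone f ∧ (∀ i, N ≤ i → f i = 0) ∧ ∑ i ∈ Finset.range N, f i = N

/-- `(row, col)` is a Young tableau of shape `f` on the letters `Fin N`: the letters
occupy exactly the cells of the Young diagram of `f`, each cell once. -/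
def IsTableau {N : ℕ} (f : ℕ → ℕ) (row col : Fin N → ℕ) : Prop :=
  Function.Injective (fun x => (row x, col x)) ∧
  ∀ r c : ℕ, (∃ x, row x = r ∧ col x = c) ↔ c < f r

/-- The Specht module `S^f`, realized as the left ideal of `ℂ[S_N]` generated by the
Young symmetrizer of a tableau of shape `f`. -/
def SpechtIdeal {N : ℕ} (row col : Fin N → ℕ) : Ideal (GA N) :=
  Ideal.span {youngSym row col}

/-- The length of the last column of the partition `f` (with at most `N` parts):
the number of parts equal to the largest part. -/
def lastColLen (f : ℕ → ℕ) (N : ℕ) : ℕ :=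
  ((Finset.range N).filter (fun i => f i = f 0)).card

/-- The number of (positive) parts of `f`, i.e. the length of its first column. -/
def numParts (f : ℕ → ℕ) (N : ℕ) : ℕ :=
  ((Finset.range N).filter (fun i => 0 < f i)).card

/-- `σ` preserves each of the two blocks `{0,…,n-1}` and `{n,…,2n-1}` of `Fin (2n)`. -/
def presBlocks (n : ℕ) (σ : Equiv.Perm (Fin (2 * n))) : Prop :=
  ∀ x, ((σ x : ℕ) < n ↔ (x : ℕ) < n)

/-- `σ` interchanges the two blocks `{0,…,n-1}` and `{n,…,2n-1}` of `Fin (2n)`. -/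
def swapsBlocks (n : ℕ) (σ : Equiv.Perm (Fin (2 * n))) : Prop :=
  ∀ x, ((σ x : ℕ) < n ↔ n ≤ (x : ℕ))

/-- The wreath product `S_n ≀ S₂ ⊆ S_{2n}`: the permutations preserving the partition of
`Fin (2n)` into the two blocks. -/
def wreath (n : ℕ) : Finset (Equiv.Perm (Fin (2 * n))) :=
  Finset.univ.filter (fun σ => presBlocks n σ ∨ swapsBlocks n σ)

/-- The one-dimensional character of `S_n ≀ S₂` corresponding to `sgn₂[sgn_n]`: it equals
`sgn(σ₁)sgn(σ₂)` on block-preserving elements `(σ₁, σ₂)` and `−sgn(σ₁)sgn(σ₂)` on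
block-swapping elements, i.e. `sgn(σ) · (−1)^{n−1}` on block-swapping `σ ∈ S_{2n}`. -/
def wreathChar (n : ℕ) (σ : Equiv.Perm (Fin (2 * n))) : ℂ :=
  sgnC σ * (if swapsBlocks n σ then (-1 : ℂ) ^ (n - 1) else 1)

/-- The composition product `sgn₂[sgn_n]`: the `S_{2n}`-module induced from the
one-dimensional character `wreathChar` of the wreath product `S_n ≀ S₂`, realized as the
left ideal of `ℂ[S_{2n}]` generated by `Σ_{h ∈ S_n ≀ S₂} χ(h) h`. -/
def compProduct (n : ℕ) : Ideal (GA (2 * n)) :=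
  Ideal.span {∑ σ ∈ wreath n, wreathChar n σ • ofP σ}

/-- The partition `2^{n−i} 1^{2i}` of `2n`. -/
def hookishShape (n i : ℕ) : ℕ → ℕ :=
  fun j => if j < n - i then 2 else if j < n + i then 1 else 0

section part1
variable {N : ℕ}

lemma ofP_mul (σ τ : Equiv.Perm (Fin N)) : ofP (σ * τ) = ofP σ * ofP τ := by
  simp [ofP]

lemma ofP_one : ofP (1 : Equiv.Perm (Fin N)) = 1 := by
  simp only [ofP, map_one]

lemma coeff_ofP (σ g : Equiv.Perm (Fin N)) : (ofP σ).coeff g = if σ = g then 1 else 0 := by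
  simp [ofP, Finsupp.single_apply]

lemma GA_ind {P : GA N → Prop} (x : GA N) (h0 : P 0) (hadd : ∀ x y, P x → P y → P (x + y))
    (hs : ∀ (z : ℂ) g, P (z • ofP g)) : P x := by
  induction x using MonoidAlgebra.induction_linear with
  | zero => exact h0
  | add f g hf hg => exact hadd _ _ hf hg
  | single m r =>
    have := hs r m
    simpa [ofP, MonoidAlgebra.smul_single] using this

/-- star -/
def st (x : GA N) : GA N :=
  MonoidAlgebra.ofCoeff (Finsupp.equivFunOnFinite.symm
    (fun g => (starRingEnd ℂ) (x.coeff g⁻¹)))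

lemma coeff_st (x : GA N) (g) : (st x).coeff g = (starRingEnd ℂ) (x.coeff g⁻¹) := rfl

lemma GA_ext {x y : GA N} (h : ∀ g, x.coeff g = y.coeff g) : x = y := by
  apply MonoidAlgebra.coeff_injective
  ext g; exact h g

lemma st_add (x y : GA N) : st (x + y) = st x + st y := by
  apply GA_ext; intro g; simp [coeff_st]

lemma st_zero : st (0 : GA N) = 0 := by
  apply GA_ext; intro g; simp [coeff_st]

lemma st_smul (z : ℂ) (x : GA N) : st (z • x) = (starRingEnd ℂ) z • st x := by
  apply GA_ext; intro g; simp [coeff_st]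

lemma st_ofP (g : Equiv.Perm (Fin N)) : st (ofP g) = ofP g⁻¹ := by
  apply GA_ext; intro h; simp only [coeff_st, coeff_ofP]
  by_cases h1 : g = h⁻¹
  · simp [h1]
  · have : ¬ g⁻¹ = h := fun h2 => h1 (by simp [← h2])
    simp [h1, this]

lemma st_st (x : GA N) : st (st x) = x := by
  apply GA_ext; intro g; simp [coeff_st]

lemma st_sum {ι : Type*} (s : Finset ι) (f : ι → GA N) :
    st (∑ i ∈ s, f i) = ∑ i ∈ s, st (f i) := by
  induction s using Finset.induction_on with
  | empty => simp [st_zero]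
  | insert a s ha ih => rw [Finset.sum_insert ha, Finset.sum_insert ha, st_add, ih]

lemma st_mul (x y : GA N) : st (x * y) = st y * st x := by
  induction x using GA_ind with
  | h0 => simp [st_zero]
  | hadd a b ha hb => simp [add_mul, mul_add, st_add, ha, hb]
  | hs z g =>
    induction y using GA_ind with
    | h0 => simp [st_zero]
    | hadd a b ha hb => rw [mul_add, st_add, ha, hb, st_add, add_mul]
    | hs w h =>
      simp only [smul_mul_assoc, mul_smul_comm, ← ofP_mul, st_smul, st_ofP, mul_inv_rev]
      rw [smul_comm]

lemma coeff_mul_one (x y : GA N) : (x * y).coeff 1 = ∑ g, x.coeff g * y.coeff g⁻¹ := by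
  induction x using GA_ind with
  | h0 => simp
  | hadd a b ha hb => simp [add_mul, Finset.sum_add_distrib, ha, hb]
  | hs z g =>
    induction y using GA_ind with
    | h0 => simp
    | hadd a b ha hb => rw [mul_add, MonoidAlgebra.coeff_add, Finsupp.add_apply, ha, hb]; simp [mul_add, Finset.sum_add_distrib]
    | hs w h =>
      simp only [smul_mul_assoc, mul_smul_comm, ← ofP_mul, MonoidAlgebra.coeff_smul_apply, coeff_ofP]
      rw [Finset.sum_eq_single g]
      · by_cases hh : h = g⁻¹
        · simp [hh, mul_comm]
        · have : ¬ g * h = 1 := fun h2 => hh (eq_inv_of_mul_eq_one_right h2)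
          simp [hh, this]
      · intro b _ hb; simp [Ne.symm hb]
      · simp

lemma st_pos (x : GA N) (h : x * st x = 0) : x = 0 := by
  have h1 : (x * st x).coeff 1 = 0 := by rw [h]; simp
  rw [coeff_mul_one] at h1
  simp only [coeff_st, inv_inv, Complex.mul_conj] at h1
  norm_cast at h1
  rw [Finset.sum_eq_zero_iff_of_nonneg (fun i _ => Complex.normSq_nonneg _)] at h1
  apply GA_ext; intro g
  simpa using h1 g (Finset.mem_univ _)

lemma st_pos' (x : GA N) (h : st x * x = 0) : x = 0 := by
  have : st x = 0 := st_pos _ (by rw [st_st, h])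
  rw [← st_st x, this, st_zero]

/-- subgroup with quadratic character -/
structure IsChar (K : Finset (Equiv.Perm (Fin N))) (χ : Equiv.Perm (Fin N) → ℂ) : Prop where
  one_mem : 1 ∈ K
  mul_mem : ∀ g h, g ∈ K → h ∈ K → g * h ∈ K
  inv_mem : ∀ g, g ∈ K → g⁻¹ ∈ K
  map_mul : ∀ g h, g ∈ K → h ∈ K → χ (g * h) = χ g * χ h
  map_pm : ∀ g, g ∈ K → χ g = 1 ∨ χ g = -1

/-- the character sum -/
def chSum (K : Finset (Equiv.Perm (Fin N))) (χ : Equiv.Perm (Fin N) → ℂ) : GA N :=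
  ∑ σ ∈ K, χ σ • ofP σ

variable {K : Finset (Equiv.Perm (Fin N))} {χ : Equiv.Perm (Fin N) → ℂ}

lemma IsChar.sq (h : IsChar K χ) (g) (hg : g ∈ K) : χ g * χ g = 1 := by
  rcases h.map_pm g hg with h | h <;> simp [h]

lemma IsChar.map_one (h : IsChar K χ) : χ 1 = 1 := by
  have h1 := h.map_mul 1 1 h.one_mem h.one_mem
  rw [mul_one, h.sq 1 h.one_mem] at h1; exact h1

lemma IsChar.map_inv (h : IsChar K χ) (g) (hg : g ∈ K) : χ g⁻¹ = χ g := by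
  have h1 := h.map_mul g g⁻¹ hg (h.inv_mem g hg)
  rw [mul_inv_cancel, h.map_one] at h1
  rcases h.map_pm g hg with h2 | h2 <;> rw [h2] at h1 ⊢
  · linear_combination (-1 : ℂ) * h1
  · linear_combination h1

lemma IsChar.left (h : IsChar K χ) (g) (hg : g ∈ K) :
    ofP g * chSum K χ = χ g • chSum K χ := by
  rw [chSum, Finset.mul_sum, Finset.smul_sum]
  refine Finset.sum_bij (fun a _ => g * a) (fun a ha => h.mul_mem _ _ hg ha)
    (fun a _ b _ hab => mul_left_cancel hab)
    (fun b hb => ⟨g⁻¹ * b, h.mul_mem _ _ (h.inv_mem _ hg) hb, by simp⟩) ?_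
  intro a ha
  rw [mul_smul_comm, ofP_mul, h.map_mul _ _ hg ha, smul_smul, ← mul_assoc, h.sq g hg, one_mul]

lemma IsChar.st (h : IsChar K χ) : st (chSum K χ) = chSum K χ := by
  rw [chSum, st_sum]
  refine Finset.sum_bij (fun a _ => a⁻¹) (fun a ha => h.inv_mem _ ha)
    (fun a _ b _ hab => inv_injective hab)
    (fun b hb => ⟨b⁻¹, h.inv_mem _ hb, by simp⟩) ?_
  intro a ha
  rw [st_smul, st_ofP, h.map_inv _ ha]
  rcases h.map_pm a ha with h2 | h2 <;> simp [h2]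

lemma IsChar.right (h : IsChar K χ) (g) (hg : g ∈ K) :
    chSum K χ * ofP g = χ g • chSum K χ := by
  have h1 := congrArg _root_.st (h.left g⁻¹ (h.inv_mem g hg))
  rw [st_mul, st_smul, h.st, st_ofP, inv_inv, h.map_inv g hg] at h1
  rw [h1]
  rcases h.map_pm g hg with h2 | h2 <;> simp [h2]

lemma IsChar.mul_self (h : IsChar K χ) : chSum K χ * chSum K χ = (K.card : ℂ) • chSum K χ := by
  conv_lhs => enter [1]; rw [chSum]
  rw [Finset.sum_mul]
  rw [Finset.sum_congr rfl (g := fun _ => chSum K χ)]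
  · rw [Finset.sum_const]; simp [Nat.cast_smul_eq_nsmul]
  · intro a ha
    rw [smul_mul_assoc, h.left a ha, smul_smul, h.sq a ha, one_smul]

lemma IsChar.card_ne (h : IsChar K χ) : (K.card : ℂ) ≠ 0 := by
  have := Finset.card_pos.2 ⟨1, h.one_mem⟩
  exact_mod_cast this.ne'

/-- The abstract construction -/
lemma abstract_piece (a b e : GA N) (α : ℂ)
    (sa : st a = a) (sb : st b = b) (se : st e = e) (ha : a * a = α • a)
    (he : e * e = e) (hab : ∀ x, ∃ z : ℂ, a * x * b = z • (a * b)) (hne : b * a * e ≠ 0) :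
    ∃ (κ : ℂ) (E : GA N), E = κ • (e * a * b * (b * a * e)) ∧ E * E = E ∧ E ≠ 0 ∧
      e * E = E ∧ E * e = E ∧
      Nonempty (↥(Ideal.span {E} : Ideal (GA N)) ≃ₗ[GA N] ↥(Ideal.span {b * a} : Ideal (GA N))) := by
  have hba : ∀ x, ∃ z : ℂ, b * x * a = z • (b * a) := by
    intro x
    obtain ⟨z, hz⟩ := hab (st x)
    refine ⟨(starRingEnd ℂ) z, ?_⟩
    have := congrArg st hz
    simpa [st_mul, st_smul, sa, sb, st_st, mul_assoc] using this
  set x := b * a * e with hx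
  clear_value x
  have hsx : st x = e * a * b := by simp [hx, st_mul, sa, sb, se, mul_assoc]
  obtain ⟨z, hz⟩ := hab (e * a)
  obtain ⟨z3, hz3⟩ := hba (a * b)
  have hxx : x * st x = z • (b * a * b) := by
    rw [hsx, hx]
    calc b * a * e * (e * a * b) = b * (a * ((e * e) * a) * b) := by noncomm_ring
      _ = _ := by rw [he, hz, mul_smul_comm, mul_assoc]
  have hxne : x * st x ≠ 0 := fun h => hne (st_pos _ h)
  have hz0 : z ≠ 0 := by
    rintro rfl
    exact hxne (by rw [hxx, zero_smul])
  obtain ⟨z4, hz4⟩ := hba (a * b * b)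
  have hxxx : x * st x * x = (z * z4) • x := by
    rw [hxx, hx, smul_mul_assoc]
    calc z • (b * a * b * (b * a * e)) = z • ((b * (a * b * b) * a) * e) := by noncomm_ring
      _ = _ := by rw [hz4, smul_mul_assoc, smul_smul]
  set k := z * z4 with hk
  have hk0 : k ≠ 0 := by
    intro h
    rw [h, zero_smul] at hxxx
    apply hne
    apply st_pos'
    apply st_pos
    rw [st_mul, st_st]
    calc st x * x * (st x * x) = st x * (x * st x * x) := by noncomm_ring
      _ = 0 := by rw [hxxx, mul_zero]
  have hxe : x * e = x := by rw [hx, mul_assoc, he]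
  have hesx : e * st x = st x := by rw [hsx, ← mul_assoc, ← mul_assoc, he]
  have hEE : k⁻¹ • (st x * x) = k⁻¹ • (e * a * b * x) := by rw [hsx]
  refine ⟨k⁻¹, k⁻¹ • (st x * x), hEE, ?_, ?_, ?_, ?_, ?_⟩
  · rw [smul_mul_smul_comm]
    rw [show st x * x * (st x * x) = st x * (x * st x * x) by noncomm_ring, hxxx,
      mul_smul_comm, smul_smul]
    congr 1; field_simp
  · intro h
    rw [smul_eq_zero] at h
    rcases h with h | h
    · exact hk0 (inv_eq_zero.1 h)
    · exact hne (st_pos' _ h)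
  · rw [mul_smul_comm, ← mul_assoc, hesx]
  · rw [smul_mul_assoc, mul_assoc, hxe]
  · let φ : GA N →ₗ[GA N] GA N := LinearMap.toSpanSingleton (GA N) (GA N) e
    have hφ : ∀ y, φ y = y * e := fun y => by simp [φ, LinearMap.toSpanSingleton]
    have hmap : Submodule.map φ (Ideal.span {b * a} : Ideal (GA N)) = Ideal.span {k⁻¹ • (st x * x)} := by
      rw [Ideal.span, Submodule.map_span, Set.image_singleton, hφ, ← hx]
      apply le_antisymm
      · rw [Submodule.span_singleton_le_iff_mem]
        refine Submodule.mem_span_singleton.2 ⟨x, ?_⟩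
        rw [smul_eq_mul, mul_smul_comm, ← mul_assoc, hxxx, smul_smul, inv_mul_cancel₀ hk0, one_smul]
      · refine (Submodule.span_singleton_le_iff_mem _ _).2 ?_
        refine Submodule.mem_span_singleton.2 ⟨k⁻¹ • st x, ?_⟩
        rw [smul_eq_mul, smul_mul_assoc]
    have hinj : Function.Injective (φ.domRestrict (Ideal.span {b * a} : Ideal (GA N))) := by
      rw [← LinearMap.ker_eq_bot, LinearMap.ker_eq_bot']
      rintro ⟨y, hy⟩ h0
      obtain ⟨w, rfl⟩ := Submodule.mem_span_singleton.1 hy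
      have h1 : w * (b * a) * e = 0 := by simpa [hφ] using h0
      have h2 : w * (b * a * b) = 0 := by
        have : w * (x * st x) = 0 := by
          rw [hx, ← mul_assoc, ← mul_assoc, h1, zero_mul]
        rw [hxx, mul_smul_comm, smul_eq_zero] at this
        exact this.resolve_left hz0
      have h3 : w * (b * a) = 0 := by
        apply st_pos
        rw [st_mul, st_mul, sa, sb]
        calc w * (b * a) * (a * b * st w) = w * (b * (a * a) * b) * st w := by noncomm_ring
          _ = 0 := by rw [ha, mul_smul_comm, smul_mul_assoc, mul_smul_comm, h2]; simp
      ext1; simpa using h3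
    have e1 := LinearEquiv.ofInjective _ hinj
    rw [LinearMap.range_domRestrict, hmap] at e1
    exact ⟨e1.symm⟩

/-- orthogonal idempotents sum up -/
lemma sum_eq {ι κ : Type} [Fintype ι] [Fintype κ] (E : ι → GA N) (e : GA N) (v : κ → GA N)
    (hE : ∀ i, E i * E i = E i) (h0 : ∀ i, E i ≠ 0) (horth : ∀ i j, i ≠ j → E i * E j = 0)
    (he : e * e = e) (h1 : ∀ i, e * E i = E i) (h2 : ∀ i, E i * e = E i)
    (hv : ∀ x, e * x * e ∈ Submodule.span ℂ (Set.range v))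
    (hcard : Fintype.card κ ≤ Fintype.card ι) : ∑ i, E i = e := by
  have hmulE : ∀ (c : ι → ℂ) j, (∑ i, c i • E i) * E j = c j • E j := by
    intro c j
    rw [Finset.sum_mul, Finset.sum_eq_single j]
    · rw [smul_mul_assoc, hE]
    · intro b _ hb; rw [smul_mul_assoc, horth _ _ hb, smul_zero]
    · simp
  have hli : LinearIndependent ℂ E := by
    rw [Fintype.linearIndependent_iff]
    intro c hc j
    have := hmulE c j
    rw [hc, zero_mul] at this
    exact (smul_eq_zero.1 this.symm).resolve_right (h0 j)
  have hle : Submodule.span ℂ (Set.range E) ≤ Submodule.span ℂ (Set.range v) := by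
    rw [Submodule.span_le]
    rintro _ ⟨i, rfl⟩
    have := hv (E i)
    rwa [h1, h2] at this
  have heq : Submodule.span ℂ (Set.range E) = Submodule.span ℂ (Set.range v) := by
    have : FiniteDimensional ℂ (Submodule.span ℂ (Set.range v)) :=
      FiniteDimensional.span_of_finite ℂ (Set.finite_range v)
    apply Submodule.eq_of_le_of_finrank_le hle
    rw [finrank_span_eq_card hli]
    exact (finrank_range_le_card v).trans hcard
  have hmem : e ∈ Submodule.span ℂ (Set.range E) := by
    rw [heq]; have := hv e; rwa [he, he] at this
  obtain ⟨c, hc⟩ := (Submodule.mem_span_range_iff_exists_fun ℂ).1 hmem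
  rw [← hc]
  refine Finset.sum_congr rfl fun j _ => ?_
  have := hmulE c j
  rw [hc, h1] at this
  exact this
end part1
section part2

lemma sgnC_mul {N : ℕ} (g h : Equiv.Perm (Fin N)) : sgnC (g * h) = sgnC g * sgnC h := by
  simp [sgnC]

lemma sgnC_pm {N : ℕ} (g : Equiv.Perm (Fin N)) : sgnC g = 1 ∨ sgnC g = -1 := by
  rcases Int.units_eq_one_or (Equiv.Perm.sign g) with h | h <;> simp [sgnC, h]

lemma sgnC_inv {N : ℕ} (g : Equiv.Perm (Fin N)) : sgnC g⁻¹ = sgnC g := by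
  simp [sgnC]

lemma sgnC_one {N : ℕ} : sgnC (1 : Equiv.Perm (Fin N)) = 1 := by
  simp [sgnC]

lemma mem_stab {N : ℕ} {h : Fin N → ℕ} {g : Equiv.Perm (Fin N)} :
    g ∈ stab h ↔ ∀ x, h (g x) = h x := by simp [stab]

lemma stab_inv {N : ℕ} {h : Fin N → ℕ} {g : Equiv.Perm (Fin N)} (hg : g ∈ stab h) :
    g⁻¹ ∈ stab h := by
  rw [mem_stab] at *
  intro x
  have := hg (g⁻¹ x)
  simpa using this.symm

lemma isChar_stab_one {N : ℕ} (h : Fin N → ℕ) : IsChar (stab h) (fun _ => 1) where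
  one_mem := by simp [mem_stab]
  mul_mem g k hg hk := by rw [mem_stab] at *; intro x; simp [hg, hk]
  inv_mem _ hg := stab_inv hg
  map_mul := by simp
  map_pm := by simp

lemma isChar_stab_sgn {N : ℕ} (h : Fin N → ℕ) : IsChar (stab h) sgnC where
  one_mem := (isChar_stab_one h).one_mem
  mul_mem := (isChar_stab_one h).mul_mem
  inv_mem _ hg := stab_inv hg
  map_mul g k _ _ := sgnC_mul g k
  map_pm g _ := sgnC_pm g

lemma not_pres_swaps {n : ℕ} (hn : 1 ≤ n) {g : Equiv.Perm (Fin (2 * n))} (h : presBlocks n g) :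
    ¬ swapsBlocks n g := by
  intro h2
  have h3 := h ⟨0, by omega⟩
  have h4 := h2 ⟨0, by omega⟩
  simp only at h3 h4
  omega

lemma mem_wreath {n : ℕ} {g : Equiv.Perm (Fin (2 * n))} :
    g ∈ wreath n ↔ presBlocks n g ∨ swapsBlocks n g := by simp [wreath]

lemma wreathChar_pres {n : ℕ} (hn : 1 ≤ n) {g : Equiv.Perm (Fin (2 * n))} (h : presBlocks n g) :
    wreathChar n g = sgnC g := by
  simp [wreathChar, not_pres_swaps hn h]

lemma wreathChar_swaps {n : ℕ} {g : Equiv.Perm (Fin (2 * n))} (h : swapsBlocks n g) :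
    wreathChar n g = sgnC g * (-1) ^ (n - 1) := by
  simp [wreathChar, h]

lemma isChar_wreath {n : ℕ} (hn : 1 ≤ n) : IsChar (wreath n) (wreathChar n) := by
  have pp : ∀ g h : Equiv.Perm (Fin (2 * n)), presBlocks n g → presBlocks n h → presBlocks n (g * h) := by
    intro g h hg hh x
    have h1 := hg (h x); have h2 := hh x
    simp only [Equiv.Perm.mul_apply]; omega
  have ps : ∀ g h : Equiv.Perm (Fin (2 * n)), presBlocks n g → swapsBlocks n h → swapsBlocks n (g * h) := by
    intro g h hg hh x
    have h1 := hg (h x); have h2 := hh x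
    simp only [Equiv.Perm.mul_apply]; omega
  have sp : ∀ g h : Equiv.Perm (Fin (2 * n)), swapsBlocks n g → presBlocks n h → swapsBlocks n (g * h) := by
    intro g h hg hh x
    have h1 := hg (h x); have h2 := hh x
    simp only [Equiv.Perm.mul_apply]; omega
  have ss : ∀ g h : Equiv.Perm (Fin (2 * n)), swapsBlocks n g → swapsBlocks n h → presBlocks n (g * h) := by
    intro g h hg hh x
    have h1 := hg (h x); have h2 := hh x
    simp only [Equiv.Perm.mul_apply]; omega
  have hsq : ((-1 : ℂ) ^ (n - 1)) * (-1) ^ (n - 1) = 1 := by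
    rw [← mul_pow]; simp
  refine ⟨?_, ?_, ?_, ?_, ?_⟩
  · rw [mem_wreath]; left; intro x; simp
  · intro g h hg hh
    rw [mem_wreath] at *
    rcases hg with hg | hg <;> rcases hh with hh | hh
    · exact Or.inl (pp _ _ hg hh)
    · exact Or.inr (ps _ _ hg hh)
    · exact Or.inr (sp _ _ hg hh)
    · exact Or.inl (ss _ _ hg hh)
  · intro g hg
    rw [mem_wreath] at *
    rcases hg with hg | hg
    · left; intro x; have := hg (g⁻¹ x); rw [← Equiv.Perm.mul_apply, mul_inv_cancel, Equiv.Perm.one_apply] at this; omega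
    · right; intro x; have := hg (g⁻¹ x); rw [← Equiv.Perm.mul_apply, mul_inv_cancel, Equiv.Perm.one_apply] at this; omega
  · intro g h hg hh
    rw [mem_wreath] at *
    rcases hg with hg | hg <;> rcases hh with hh | hh
    · rw [wreathChar_pres hn (pp _ _ hg hh), wreathChar_pres hn hg, wreathChar_pres hn hh, sgnC_mul]
    · rw [wreathChar_swaps (ps _ _ hg hh), wreathChar_pres hn hg, wreathChar_swaps hh, sgnC_mul]; ring
    · rw [wreathChar_swaps (sp _ _ hg hh), wreathChar_pres hn hh, wreathChar_swaps hg, sgnC_mul]; ring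
    · rw [wreathChar_pres hn (ss _ _ hg hh), wreathChar_swaps hg, wreathChar_swaps hh, sgnC_mul]
      linear_combination (-sgnC g * sgnC h) * hsq
  · intro g hg
    rw [mem_wreath] at hg
    rcases hg with hg | hg
    · rw [wreathChar_pres hn hg]; exact sgnC_pm g
    · rw [wreathChar_swaps hg]
      rcases sgnC_pm g with h | h <;> rcases neg_one_pow_eq_or ℂ (n - 1) with h2 | h2 <;>
        simp [h, h2]

/-- canonical tableau rows -/
def rowT (n i : ℕ) (x : Fin (2 * n)) : ℕ := if (x : ℕ) < n + i then x else x - (n + i)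
/-- canonical tableau columns -/
def colT (n i : ℕ) (x : Fin (2 * n)) : ℕ := if (x : ℕ) < n + i then 0 else 1

lemma rowT_congr {n i : ℕ} {x y : Fin (2 * n)} (h : ((x : ℕ) < n - i ∧ (y : ℕ) = n + i + x) ∨
    (n + i ≤ (x : ℕ) ∧ (y : ℕ) = x - (n + i)) ∨ (y : ℕ) = x) : rowT n i y = rowT n i x := by
  have := x.2
  have := y.2
  simp only [rowT]; split_ifs <;> omega

lemma isTableau_can (n i : ℕ) (hi : i ≤ n) : IsTableau (hookishShape n i) (rowT n i) (colT n i) := by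
  constructor
  · intro x y h
    simp only [rowT, colT, Prod.mk.injEq] at h
    ext
    obtain ⟨h1, h2⟩ := h
    split_ifs at h1 h2 <;> omega
  · intro r c
    simp only [hookishShape]
    constructor
    · rintro ⟨x, rfl, rfl⟩
      have := x.2
      simp only [rowT, colT]
      split_ifs <;> omega
    · intro h
      by_cases hc : c = 0
      · refine ⟨⟨r, ?_⟩, ?_, ?_⟩
        · split_ifs at h <;> omega
        · simp only [rowT]; split_ifs at h ⊢ <;> omega
        · simp only [colT]; split_ifs at h ⊢ <;> omega
      · refine ⟨⟨n + i + r, ?_⟩, ?_, ?_⟩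
        · split_ifs at h <;> omega
        · simp only [rowT]; split_ifs at h ⊢ <;> omega
        · simp only [colT]; split_ifs at h ⊢ <;> omega

/-- row symmetrizer -/
def aT (n i : ℕ) : GA (2 * n) := chSum (stab (rowT n i)) (fun _ => 1)
/-- column antisymmetrizer -/
def bT (n i : ℕ) : GA (2 * n) := chSum (stab (colT n i)) sgnC

lemma swap_mem_stab {N : ℕ} {h : Fin N → ℕ} {u v : Fin N} (huv : h u = h v) :
    Equiv.swap u v ∈ stab h := by
  rw [mem_stab]; intro x
  rw [Equiv.swap_apply_def]; split_ifs with h1 h2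
  · rw [h1, huv]
  · rw [h2, huv]
  · rfl

lemma kill {N : ℕ} {row col : Fin N → ℕ} (σ : Equiv.Perm (Fin N)) (u v : Fin N) (huv : u ≠ v)
    (hr : row u = row v) (hc : col (σ⁻¹ u) = col (σ⁻¹ v)) :
    chSum (stab row) (fun _ => 1) * ofP σ * chSum (stab col) sgnC = 0 := by
  have h1 := (isChar_stab_one row).right _ (swap_mem_stab hr)
  have h2 := (isChar_stab_sgn col).left _ (swap_mem_stab hc)
  have h3 : Equiv.swap u v * σ = σ * Equiv.swap (σ⁻¹ u) (σ⁻¹ v) := by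
    rw [Equiv.swap_apply_apply]; group
  have h4 : sgnC (Equiv.swap (σ⁻¹ u) (σ⁻¹ v)) = -1 := by
    have : σ⁻¹ u ≠ σ⁻¹ v := fun h => huv (σ⁻¹.injective h)
    simp only [sgnC, Equiv.Perm.sign_swap this]; simp
  set a := chSum (stab row) (fun _ => 1)
  set b := chSum (stab col) sgnC
  rw [one_smul] at h1
  rw [h4] at h2
  have h5 : a * ofP σ * b = - (a * ofP σ * b) := by
    calc a * ofP σ * b = a * ofP (Equiv.swap u v * σ) * b := by rw [ofP_mul, ← mul_assoc, h1]
      _ = a * ofP σ * (ofP (Equiv.swap (σ⁻¹ u) (σ⁻¹ v)) * b) := by rw [h3, ofP_mul]; noncomm_ring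
      _ = _ := by rw [h2]; simp
  have h6 : (2 : ℂ) • (a * ofP σ * b) = 0 := by
    rw [two_smul]; nth_rewrite 1 [h5]; simp
  exact (smul_eq_zero.1 h6).resolve_left two_ne_zero

lemma aT_bT_zero {n i j : ℕ} (hj : j ≤ n) (hij : i < j) (x : GA (2 * n)) :
    aT n i * x * bT n j = 0 := by
  induction x using GA_ind with
  | h0 => simp
  | hadd a b ha hb => rw [mul_add, add_mul, ha, hb, add_zero]
  | hs z σ =>
    rw [mul_smul_comm, smul_mul_assoc]
    suffices h : ∃ u v : Fin (2 * n), u ≠ v ∧ rowT n i u = rowT n i v ∧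
        colT n j (σ⁻¹ u) = colT n j (σ⁻¹ v) by
      obtain ⟨u, v, h1, h2, h3⟩ := h
      rw [aT, bT, kill σ u v h1 h2 h3, smul_zero]
    by_contra hcon
    push Not at hcon
    have key : ∀ r : Fin (n - i), ∃ w : Fin (2 * n), rowT n i w = r ∧ n + j ≤ (σ⁻¹ w : ℕ) := by
      intro r
      have hr := r.2
      have := hcon ⟨r, by omega⟩ ⟨n + i + r, by omega⟩ (by simp; omega)
        (by simp only [rowT]; split_ifs <;> omega)
      by_cases h1 : n + j ≤ (σ⁻¹ ⟨r, by omega⟩ : Fin (2 * n)).val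
      · exact ⟨_, by simp only [rowT]; split_ifs <;> omega, h1⟩
      · refine ⟨⟨n + i + r, by omega⟩, by simp only [rowT]; split_ifs <;> omega, ?_⟩
        simp only [colT] at this
        split_ifs at this <;> omega
    choose w hw1 hw2 using key
    have hinj : Function.Injective (fun r : Fin (n - i) =>
        (⟨(σ⁻¹ (w r) : ℕ) - (n + j), by have := (σ⁻¹ (w r)).2; have := hw2 r; omega⟩ : Fin (n - j))) := by
      intro r s hrs
      simp only [Fin.mk.injEq] at hrs
      have h1 := hw2 r; have h2 := hw2 s
      have h3 : σ⁻¹ (w r) = σ⁻¹ (w s) := by ext; omega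
      have h4 := σ⁻¹.injective h3
      ext
      rw [← hw1 r, ← hw1 s, h4]
    have := Fintype.card_le_of_injective _ hinj
    simp at this
    omega

lemma mem_stab_of_imp {n i : ℕ} (g : Equiv.Perm (Fin (2 * n)))
    (h : ∀ x : Fin (2 * n), n + i ≤ (x : ℕ) → n + i ≤ (g x : ℕ)) : g ∈ stab (colT n i) := by
  let S : Finset (Fin (2 * n)) := Finset.univ.filter (fun x => n + i ≤ (x : ℕ))
  have hS : S.map g.toEmbedding = S := by
    apply Finset.eq_of_subset_of_card_le
    · intro y hy
      simp only [Finset.mem_map, S, Finset.mem_filter, Finset.mem_univ, true_and] at hy ⊢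
      obtain ⟨x, hx, rfl⟩ := hy
      exact h x hx
    · simp
  rw [mem_stab]; intro x
  have : n + i ≤ (g x : ℕ) → n + i ≤ (x : ℕ) := by
    intro hx
    have h1 : g x ∈ S := by simp [S, hx]
    rw [← hS] at h1
    simpa [S] using h1
  have h2 := h x
  simp only [colT]; split_ifs <;> omega

lemma aT_bT_one {n i : ℕ} (hi : i ≤ n) (x : GA (2 * n)) :
    ∃ z : ℂ, aT n i * x * bT n i = z • (aT n i * bT n i) := by
  induction x using GA_ind with
  | h0 => exact ⟨0, by simp⟩
  | hadd a b ha hb =>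
    obtain ⟨z, hz⟩ := ha
    obtain ⟨w, hw⟩ := hb
    exact ⟨z + w, by rw [mul_add, add_mul, hz, hw, add_smul]⟩
  | hs z σ =>
    by_cases h : ∃ u v : Fin (2 * n), u ≠ v ∧ rowT n i u = rowT n i v ∧
        colT n i (σ⁻¹ u) = colT n i (σ⁻¹ v)
    · obtain ⟨u, v, h1, h2, h3⟩ := h
      exact ⟨0, by rw [mul_smul_comm, smul_mul_assoc, aT, bT, kill σ u v h1 h2 h3]; simp⟩
    push Not at h
    suffices hp : ∃ p : Equiv.Perm (Fin (2 * n)), p ∈ stab (rowT n i) ∧ σ⁻¹ * p ∈ stab (colT n i) by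
      obtain ⟨p, hp, hg⟩ := hp
      have h1 := (isChar_stab_one (rowT n i)).right _ hp
      have h2 := (isChar_stab_sgn (colT n i)).left _ (stab_inv hg)
      refine ⟨z * sgnC (σ⁻¹ * p)⁻¹, ?_⟩
      have h3 : ofP σ = ofP p * ofP (σ⁻¹ * p)⁻¹ := by rw [← ofP_mul]; congr 1; group
      rw [mul_smul_comm, smul_mul_assoc, h3, mul_smul]
      congr 1
      rw [aT, bT, ← mul_assoc, h1, one_smul, mul_assoc, h2, mul_smul_comm]
    let D : ℕ → Prop := fun r => ∃ h : r < 2 * n, n + i ≤ (σ⁻¹ ⟨r, h⟩ : ℕ)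
    let f : Fin (2 * n) → Fin (2 * n) := fun x =>
      if h : (x : ℕ) < n - i ∧ D x then ⟨n + i + x, by omega⟩
      else if h : n + i ≤ (x : ℕ) ∧ D (x - (n + i)) then ⟨x - (n + i), by omega⟩ else x
    have hfv : ∀ x, (f x : ℕ) = if (x : ℕ) < n - i ∧ D x then n + i + x else
      if n + i ≤ (x : ℕ) ∧ D (x - (n + i)) then x - (n + i) else x := by
      intro x; simp only [f]; split_ifs <;> rfl
    have hf : Function.Involutive f := by
      intro x
      have hx := x.2
      by_cases h1 : (x : ℕ) < n - i ∧ D x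
      · have e1 : (f x : ℕ) = n + i + x := by rw [hfv, if_pos h1]
        ext
        rw [hfv, if_neg (by rw [e1]; omega), if_pos (by rw [e1]; simp; exact h1.2), e1]
        omega
      · by_cases h2 : n + i ≤ (x : ℕ) ∧ D (x - (n + i))
        · have e1 : (f x : ℕ) = x - (n + i) := by rw [hfv, if_neg h1, if_pos h2]
          ext
          rw [hfv, if_pos (by rw [e1]; exact ⟨by omega, h2.2⟩), e1]
          omega
        · have e1 : f x = x := by ext; rw [hfv, if_neg h1, if_neg h2]
          rw [e1, e1]
    refine ⟨hf.toPerm f, ?_, ?_⟩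
    · rw [mem_stab]; intro x
      have h1 := hfv x
      have hx := x.2
      apply rowT_congr
      simp only [Function.Involutive.coe_toPerm]
      by_cases c1 : (x : ℕ) < n - i ∧ D x
      · rw [if_pos c1] at h1; omega
      · rw [if_neg c1] at h1
        by_cases c2 : n + i ≤ (x : ℕ) ∧ D (x - (n + i))
        · rw [if_pos c2] at h1; omega
        · rw [if_neg c2] at h1; omega
    · apply mem_stab_of_imp
      intro x hx
      have hx2 := x.2
      simp only [Equiv.Perm.mul_apply, Function.Involutive.coe_toPerm]
      by_cases hD : D (x - (n + i))
      · have e1 : (f x : ℕ) = x - (n + i) := by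
          rw [hfv, if_neg (by omega), if_pos ⟨hx, hD⟩]
        obtain ⟨h1, h2⟩ := hD
        have : f x = ⟨x - (n + i), h1⟩ := Fin.ext e1
        rw [this]; exact h2
      · have e1 : f x = x := by ext; rw [hfv, if_neg (by omega), if_neg (by tauto)]
        rw [e1]
        have h1 := h x ⟨x - (n + i), by omega⟩ (by intro h; rw [Fin.ext_iff] at h; simp at h; omega)
          (by simp only [rowT]; split_ifs <;> omega)
        by_contra h2
        have h3 : ¬ (n + i ≤ (σ⁻¹ ⟨x - (n + i), by omega⟩ : Fin (2 * n)).val) := fun h => hD ⟨_, h⟩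
        simp only [colT] at h1
        split_ifs at h1 <;> omega

end part2
section part3

lemma exists_pairSwap {n i : ℕ} (k : ℕ) (hk : k + i ≤ n) :
    ∃ P : Equiv.Perm (Fin (2 * n)), sgnC P = (-1) ^ k ∧ ∀ x : Fin (2 * n), (P x : ℕ) =
      if (x : ℕ) < k then n + i + x else if n + i ≤ (x : ℕ) ∧ (x : ℕ) < n + i + k then x - (n + i)
      else x := by
  induction k with
  | zero => exact ⟨1, by simp [sgnC_one], by intro x; simp⟩
  | succ k ih =>
    obtain ⟨P, h1, h2⟩ := ih (by omega)
    refine ⟨P * Equiv.swap ⟨k, by omega⟩ ⟨n + i + k, by omega⟩, ?_, ?_⟩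
    · rw [sgnC_mul, h1, pow_succ]
      congr 1
      rw [sgnC, Equiv.Perm.sign_swap (by intro h; rw [Fin.ext_iff] at h; simp at h; omega)]
      simp
    · intro x
      rw [Equiv.Perm.mul_apply, h2]
      have hx := x.2
      rw [Equiv.swap_apply_def]
      simp only [Fin.ext_iff]
      by_cases c1 : (x : ℕ) = k
      · simp only [c1, if_true]
        split_ifs <;> omega
      · by_cases c2 : (x : ℕ) = n + i + k
        · simp only [c2]
          split_ifs <;> simp at * <;> omega
        · simp only [c1, c2, if_false]
          split_ifs <;> omega

lemma row_stab_cases {n i : ℕ} {p : Equiv.Perm (Fin (2 * n))} (hp : p ∈ stab (rowT n i))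
    (x : Fin (2 * n)) : (p x : ℕ) = x ∨ (n + i ≤ (p x : ℕ) ∧ (p x : ℕ) = n + i + x) ∨
      (n + i ≤ (x : ℕ) ∧ (p x : ℕ) = x - (n + i)) := by
  rw [mem_stab] at hp
  have h1 := hp x
  simp only [rowT] at h1
  split_ifs at h1 <;> omega

lemma term_one {n i : ℕ} (hn : 1 ≤ n) (hi : i ≤ n) (hodd : Odd i) {q p w : Equiv.Perm (Fin (2 * n))}
    (hq : q ∈ stab (colT n i)) (hp : p ∈ stab (rowT n i)) (hw : w ∈ wreath n)
    (h : q * p * w = 1) : sgnC q * wreathChar n w = 1 := by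
  have hs : sgnC q * sgnC p * sgnC w = 1 := by rw [← sgnC_mul, ← sgnC_mul, h, sgnC_one]
  have hcol : ∀ y, (q y : ℕ) < n + i → (y : ℕ) < n + i := by
    intro y hy
    rw [mem_stab] at hq
    have := hq y
    simp only [colT] at this
    split_ifs at this <;> omega
  have hqpw : ∀ x, q (p (w x)) = x := fun x => by
    have := congrArg (fun g => g x) h
    simpa using this
  have hwsurj : ∀ y, ∃ x, w x = y := w.surjective
  have hcs := row_stab_cases hp
  have key : sgnC p * sgnC w * wreathChar n w = 1 → sgnC q * wreathChar n w = 1 := by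
    intro h1
    rcases sgnC_pm p with h2 | h2 <;> rcases sgnC_pm w with h3 | h3 <;>
      rw [h2, h3] at h1 hs <;> simp at h1 hs
    · rw [h1, hs]; simp
    · linear_combination (-wreathChar n w) * hs + h1
    · linear_combination (-wreathChar n w) * hs + h1
    · rw [h1, hs]; simp
  apply key
  rw [mem_wreath] at hw
  rcases hw with hw | hw
  · rw [wreathChar_pres hn hw]
    have hp1 : p = 1 := by
      ext y
      rw [Equiv.Perm.one_apply]
      have hlow : ∀ y : Fin (2 * n), (y : ℕ) < n → (p y : ℕ) = y := by
        intro y hy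
        obtain ⟨x, rfl⟩ := hwsurj y
        have h1 := hw x
        have h2 := hcol (p (w x)) (by rw [hqpw]; omega)
        have h3 := hcs (w x)
        omega
      rcases hcs y with h1 | h1 | h1
      · exact h1
      · have := (p y).2
        exact hlow y (by omega)
      · have hy := y.2
        have h4 := hlow (p y) (by omega)
        have h5 : p y = y := p.injective (Fin.ext h4)
        rw [h5]
    rw [hp1, sgnC_one]
    rcases sgnC_pm w with h3 | h3 <;> rw [h3] <;> simp
  · rw [wreathChar_swaps hw]
    obtain ⟨P, hP1, hP2⟩ := exists_pairSwap (n := n) (i := i) (n - i) (by omega)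
    have hhigh : ∀ y : Fin (2 * n), n + i ≤ (y : ℕ) → (p y : ℕ) = y - (n + i) := by
      intro y hy
      obtain ⟨x, rfl⟩ := hwsurj y
      have h1 := hw x
      have h2 := hcol (p (w x)) (by rw [hqpw]; omega)
      have h3 := hcs (w x)
      omega
    have hpP : p = P := by
      ext y
      have hy := y.2
      rw [hP2]
      by_cases c1 : n + i ≤ (y : ℕ)
      · rw [hhigh y c1]; split_ifs <;> omega
      · have h3 := hcs y
        have h4 := (p y).2
        by_cases c2 : (y : ℕ) < n - i
        · rw [if_pos c2]
          have h5 : (p y : ℕ) ≠ y := by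
            intro h6
            have h7 := hhigh ⟨n + i + y, by omega⟩ (by simp)
            have h8 : p ⟨n + i + y, by omega⟩ = p y := by
              ext; rw [h7, h6]; simp
            have h9 := p.injective h8
            rw [Fin.ext_iff] at h9
            simp at h9; omega
          omega
        · rw [if_neg c2, if_neg (by omega)]
          omega
    rw [hpP, hP1]
    have h1 : ((-1 : ℂ)) ^ (n - i) * (-1) ^ (n - 1) = 1 := by
      rw [← pow_add]
      apply Even.neg_one_pow
      obtain ⟨m, hm⟩ := hodd
      exact ⟨n - 1 - m, by omega⟩
    rcases sgnC_pm w with h3 | h3 <;> rw [h3] <;> linear_combination h1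

/-- unnormalized wreath idempotent -/
def e0 (n : ℕ) : GA (2 * n) := chSum (wreath n) (wreathChar n)

lemma bae_ne {n i : ℕ} (hn : 1 ≤ n) (hi : i ≤ n) (hodd : Odd i) :
    bT n i * aT n i * e0 n ≠ 0 := by
  intro h0
  have h1 : (bT n i * aT n i * e0 n).coeff 1 = 0 := by rw [h0]; simp
  have h2 : (bT n i * aT n i * e0 n).coeff 1 = 
      ((∑ w ∈ wreath n, ∑ p ∈ stab (rowT n i), ∑ q ∈ stab (colT n i),
        if q * p * w = 1 then 1 else 0 : ℕ) : ℂ) := by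
    simp only [bT, aT, e0, chSum, Finset.mul_sum, Finset.sum_mul, smul_mul_assoc, mul_smul_comm,
      Finset.smul_sum, ← ofP_mul, MonoidAlgebra.coeff_sum, Finsupp.finsetSum_apply, MonoidAlgebra.coeff_smul_apply,
      coeff_ofP, one_smul]
    push_cast
    refine Finset.sum_congr rfl fun w hw => Finset.sum_congr rfl fun p hp =>
      Finset.sum_congr rfl fun q hq => ?_
    split_ifs with h
    · have := term_one hn hi hodd hq hp hw h
      simp only [smul_eq_mul]
      linear_combination this
    · simp
  rw [h2, Nat.cast_eq_zero] at h1
  have h3 := (isChar_wreath hn).one_mem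
  have h4 := (isChar_stab_one (rowT n i)).one_mem
  have h5 := (isChar_stab_one (colT n i)).one_mem
  simp only [Finset.sum_eq_zero_iff] at h1
  have := h1 1 h3 1 h4 1 h5
  simp at this

lemma exists_perm_fib {α β : Type} [Fintype α] [DecidableEq β] (h h' : α → β)
    (hc : ∀ b, (Finset.univ.filter (fun x => h x = b)).card =
      (Finset.univ.filter (fun x => h' x = b)).card) :
    ∃ w : Equiv.Perm α, ∀ x, h' (w x) = h x := by
  have e : ∀ b, {x // h x = b} ≃ {x // h' x = b} := fun b =>
    Fintype.equivOfCardEq (by rw [Fintype.card_subtype, Fintype.card_subtype]; convert hc b)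
  exact ⟨Equiv.ofFiberEquiv e, fun x => Equiv.ofFiberEquiv_map e x⟩

/-- double coset invariant -/
def cnt (n : ℕ) (P Q : Bool) (σ : Equiv.Perm (Fin (2 * n))) : ℕ :=
  (Finset.univ.filter (fun x : Fin (2 * n) => (decide ((x : ℕ) < n), decide ((σ⁻¹ x : ℕ) < n)) = (P, Q))).card

lemma card_lt (n : ℕ) (P : Bool) :
    (Finset.univ.filter (fun x : Fin (2 * n) => decide ((x : ℕ) < n) = P)).card = n := by
  have h1 : (Finset.univ.filter (fun x : Fin (2 * n) => decide ((x : ℕ) < n) = true)).card = n := by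
    have := Fin.card_filter_val_lt (n := 2 * n) (m := n)
    simp only [decide_eq_true_eq]
    convert this using 1
    omega
  cases P
  · have h2 := Finset.card_filter_add_card_filter_not (s := (Finset.univ : Finset (Fin (2 * n))))
      (fun x : Fin (2 * n) => decide ((x : ℕ) < n) = true)
    rw [h1] at h2
    simp only [Bool.not_eq_true, Finset.card_univ, Fintype.card_fin] at h2
    omega
  · exact h1

lemma cnt_row (n : ℕ) (P : Bool) (σ : Equiv.Perm (Fin (2 * n))) :
    cnt n P true σ + cnt n P false σ = n := by
  refine Eq.trans ?_ (card_lt n P)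
  rw [cnt, cnt, ← Finset.card_filter_add_card_filter_not
    (s := Finset.univ.filter (fun x : Fin (2 * n) => decide ((x : ℕ) < n) = P))
    (fun x => decide ((σ⁻¹ x : ℕ) < n) = true), Finset.filter_filter, Finset.filter_filter]
  simp only [Prod.mk.injEq, Bool.not_eq_true]

lemma cnt_col (n : ℕ) (Q : Bool) (σ : Equiv.Perm (Fin (2 * n))) :
    cnt n true Q σ + cnt n false Q σ = n := by
  have h : (Finset.univ.filter (fun x : Fin (2 * n) => decide ((σ⁻¹ x : ℕ) < n) = Q)).card = n := by
    refine Eq.trans ?_ (card_lt n Q)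
    refine Finset.card_bij (fun x _ => σ⁻¹ x) (by simp) (by simp) ?_
    intro b hb
    exact ⟨σ b, by simpa using hb, by simp⟩
  refine Eq.trans ?_ h
  rw [cnt, cnt, ← Finset.card_filter_add_card_filter_not
    (s := Finset.univ.filter (fun x : Fin (2 * n) => decide ((σ⁻¹ x : ℕ) < n) = Q))
    (fun x => decide ((x : ℕ) < n) = true), Finset.filter_filter, Finset.filter_filter]
  simp only [Prod.mk.injEq, Bool.not_eq_true, and_comm]

lemma double_coset (n : ℕ) (σ σ' : Equiv.Perm (Fin (2 * n)))
    (h : cnt n false true σ = cnt n false true σ') :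
    ∃ w w', presBlocks n w ∧ presBlocks n w' ∧ σ' = w * σ * w' := by
  have hall : ∀ P Q, cnt n P Q σ = cnt n P Q σ' := by
    have a1 := cnt_row n true σ
    have a2 := cnt_row n false σ
    have a3 := cnt_col n true σ
    have b1 := cnt_row n true σ'
    have b2 := cnt_row n false σ'
    have b3 := cnt_col n true σ'
    intro P Q
    cases P <;> cases Q <;> omega
  obtain ⟨w, hw⟩ := exists_perm_fib
    (fun x : Fin (2 * n) => (decide ((x : ℕ) < n), decide ((σ⁻¹ x : ℕ) < n)))
    (fun x : Fin (2 * n) => (decide ((x : ℕ) < n), decide ((σ'⁻¹ x : ℕ) < n)))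
    (fun b => hall b.1 b.2)
  simp only [Prod.mk.injEq, decide_eq_decide] at hw
  refine ⟨w, σ⁻¹ * w⁻¹ * σ', fun x => (hw x).1, ?_, by group⟩
  intro y
  have h1 := (hw (w⁻¹ (σ' y))).2
  simpa using h1.symm

lemma exists_tau (n : ℕ) : ∃ τ : Equiv.Perm (Fin (2 * n)), swapsBlocks n τ := by
  let f : Fin (2 * n) → Fin (2 * n) := fun x =>
    if h : (x : ℕ) < n then ⟨n + x, by omega⟩ else ⟨x - n, by omega⟩
  have hfv : ∀ x, (f x : ℕ) = if (x : ℕ) < n then n + x else x - n := by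
    intro x; simp only [f]; split_ifs <;> rfl
  have hf : Function.Involutive f := by
    intro x
    ext
    rw [hfv, hfv]
    by_cases h : (x : ℕ) < n
    · rw [if_pos h, if_neg (by omega)]; omega
    · rw [if_neg h, if_pos (by omega)]; omega
  refine ⟨hf.toPerm f, ?_⟩
  intro x
  simp only [Function.Involutive.coe_toPerm]
  rw [hfv]
  by_cases h : (x : ℕ) < n
  · rw [if_pos h]; omega
  · rw [if_neg h]; omega

lemma cnt_tau (n : ℕ) (σ τ : Equiv.Perm (Fin (2 * n))) (hτ : swapsBlocks n τ) :
    cnt n false true (σ * τ) + cnt n false true σ = n := by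
  have : cnt n false true (σ * τ) = cnt n false false σ := by
    unfold cnt
    congr 1
    ext x
    have h1 := hτ ((σ * τ)⁻¹ x)
    have h2 : τ ((σ * τ)⁻¹ x) = σ⁻¹ x := by simp [mul_inv_rev]
    rw [h2] at h1
    simp only [Finset.mem_filter, Finset.mem_univ, true_and, Prod.mk.injEq, decide_eq_true_eq,
      decide_eq_false_iff_not]
    omega
  have := cnt_row n false σ
  omega

lemma eσe_coset {n : ℕ} (hn : 1 ≤ n) (σ σ' w w' : Equiv.Perm (Fin (2 * n))) (hw : presBlocks n w)
    (hw' : presBlocks n w') (h : σ' = w * σ * w') :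
    e0 n * ofP σ' * e0 n = (sgnC w * sgnC w') • (e0 n * ofP σ * e0 n) := by
  have h1 := (isChar_wreath hn).right w (mem_wreath.2 (Or.inl hw))
  have h2 := (isChar_wreath hn).left w' (mem_wreath.2 (Or.inl hw'))
  rw [wreathChar_pres hn hw] at h1
  rw [wreathChar_pres hn hw'] at h2
  change e0 n * ofP w = _ • e0 n at h1
  change ofP w' * e0 n = _ • e0 n at h2
  rw [h, ofP_mul, ofP_mul]
  calc e0 n * (ofP w * ofP σ * ofP w') * e0 n = (e0 n * ofP w) * ofP σ * (ofP w' * e0 n) := by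
        noncomm_ring
    _ = _ := by rw [h1, h2, smul_mul_assoc, smul_mul_smul_comm]

lemma eσe_tau {n : ℕ} (hn : 1 ≤ n) (σ τ : Equiv.Perm (Fin (2 * n))) (hτ : swapsBlocks n τ) :
    e0 n * ofP (σ * τ) * e0 n = wreathChar n τ • (e0 n * ofP σ * e0 n) := by
  have h2 := (isChar_wreath hn).left τ (mem_wreath.2 (Or.inr hτ))
  change ofP τ * e0 n = _ • e0 n at h2
  rw [ofP_mul, mul_assoc, mul_assoc, h2, mul_smul_comm, mul_smul_comm, mul_assoc]

lemma span_bound {n : ℕ} (hn : 1 ≤ n) : ∃ v : {t : Fin n // 2 * (t : ℕ) < n} → GA (2 * n),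
    ∀ x, e0 n * x * e0 n ∈ Submodule.span ℂ (Set.range v) := by
  refine ⟨fun t => if h : ∃ σ, cnt n false true σ = (t.1 : ℕ) then e0 n * ofP h.choose * e0 n else 0, ?_⟩
  set v : {t : Fin n // 2 * (t : ℕ) < n} → GA (2 * n) := fun t =>
    if h : ∃ σ, cnt n false true σ = (t.1 : ℕ) then e0 n * ofP h.choose * e0 n else 0 with hv
  obtain ⟨τ, hτ⟩ := exists_tau n
  have hτ2 : wreathChar n τ * wreathChar n τ = 1 :=
    (isChar_wreath hn).sq τ (mem_wreath.2 (Or.inr hτ))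
  have small : ∀ σ, 2 * cnt n false true σ < n →
      e0 n * ofP σ * e0 n ∈ Submodule.span ℂ (Set.range v) := by
    intro σ hσ
    let t : {t : Fin n // 2 * (t : ℕ) < n} := ⟨⟨cnt n false true σ, by omega⟩, hσ⟩
    have hex : ∃ σ', cnt n false true σ' = (t.1 : ℕ) := ⟨σ, rfl⟩
    have hvt : v t = e0 n * ofP hex.choose * e0 n := by simp only [hv]; rw [dif_pos hex]
    obtain ⟨w, w', hw, hw', h⟩ := double_coset n hex.choose σ hex.choose_spec
    rw [eσe_coset hn _ _ w w' hw hw' h, ← hvt]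
    exact Submodule.smul_mem _ _ (Submodule.subset_span ⟨t, rfl⟩)
  intro x
  induction x using GA_ind with
  | h0 => simp
  | hadd a b ha hb => rw [mul_add, add_mul]; exact Submodule.add_mem _ ha hb
  | hs z σ =>
    rw [mul_smul_comm, smul_mul_assoc]
    apply Submodule.smul_mem
    have hc := cnt_tau n σ τ hτ
    have hst := eσe_tau hn σ τ hτ
    rcases lt_trichotomy (2 * cnt n false true σ) n with h | h | h
    · exact small σ h
    · obtain ⟨w, w', hw, hw', hww⟩ := double_coset n σ (σ * τ) (by omega)
      have h2 := eσe_coset hn _ _ w w' hw hw' hww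
      have hs : sgnC w * sgnC w' = sgnC τ := by
        have h3 := congrArg sgnC hww
        rw [sgnC_mul, sgnC_mul, sgnC_mul] at h3
        rcases sgnC_pm σ with h4 | h4 <;> rw [h4] at h3
        · linear_combination -h3
        · linear_combination h3
      have hpow : ((-1 : ℂ)) ^ (n - 1) = -1 := by
        apply Odd.neg_one_pow
        exact ⟨cnt n false true σ - 1, by omega⟩
      rw [hst, hs, wreathChar_swaps hτ, hpow] at h2
      have h3 : (2 * sgnC τ) • (e0 n * ofP σ * e0 n) = 0 := by
        rw [show 2 * sgnC τ = sgnC τ + sgnC τ by ring, add_smul]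
        nth_rewrite 1 [← h2]
        rw [← add_smul]; simp
      have h4 : 2 * sgnC τ ≠ 0 := by
        rcases sgnC_pm τ with h | h <;> rw [h] <;> norm_num
      rw [(smul_eq_zero.1 h3).resolve_left h4]
      exact Submodule.zero_mem _
    · have h1 := small (σ * τ) (by omega)
      rw [hst] at h1
      have h2 := Submodule.smul_mem _ (wreathChar n τ) h1
      rwa [smul_smul, hτ2, one_smul] at h2

lemma youngSym_eq {N : ℕ} (row col : Fin N → ℕ) :
    youngSym row col = chSum (stab col) sgnC * chSum (stab row) (fun _ => 1) := by
  simp [youngSym, chSum]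

lemma specht_conj {N : ℕ} {f : ℕ → ℕ} {row col row' col' : Fin N → ℕ}
    (h : IsTableau f row col) (h' : IsTableau f row' col') :
    Nonempty (↥(SpechtIdeal row col) ≃ₗ[GA N] ↥(SpechtIdeal row' col')) := by
  have hex : ∀ x, ∃ y, row' y = row x ∧ col' y = col x := fun x =>
    (h'.2 _ _).2 ((h.2 _ _).1 ⟨x, rfl, rfl⟩)
  choose g0 hg1 hg2 using hex
  have hinj : Function.Injective g0 := by
    intro x y hxy
    apply h.1
    simp only [Prod.mk.injEq]
    rw [← hg1, ← hg1, ← hg2, ← hg2, hxy]; simp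
  let g : Equiv.Perm (Fin N) := Equiv.ofBijective g0 (Finite.injective_iff_bijective.1 hinj)
  have hr : ∀ x, row' (g x) = row x := hg1
  have hc : ∀ x, col' (g x) = col x := hg2
  have conj : ∀ (k k' : Fin N → ℕ) (χ : Equiv.Perm (Fin N) → ℂ)
      (hχ : ∀ s, χ (g * s * g⁻¹) = χ s) (hk : ∀ x, k' (g x) = k x),
      ofP g * chSum (stab k) χ * ofP g⁻¹ = chSum (stab k') χ := by
    intro k k' χ hχ hk
    rw [chSum, chSum, Finset.mul_sum, Finset.sum_mul]
    have hk2 : ∀ x, k (g⁻¹ x) = k' x := fun x => by rw [← hk]; simp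
    refine Finset.sum_bij (fun s _ => g * s * g⁻¹) ?_ ?_ ?_ ?_
    · intro s hs
      rw [mem_stab] at *
      intro x
      simp only [Equiv.Perm.mul_apply, hk, hs, hk2]
    · intro s _ t _ hst
      simpa using hst
    · intro t ht
      refine ⟨g⁻¹ * t * g, ?_, by group⟩
      rw [mem_stab] at *
      intro x
      simp only [Equiv.Perm.mul_apply, hk, ht, hk2]
    · intro s _
      rw [hχ, mul_smul_comm, smul_mul_assoc, ofP_mul, ofP_mul]
  have hg : ofP g⁻¹ * ofP g = 1 := by rw [← ofP_mul]; simp [ofP_one]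
  have hg' : ofP g * ofP g⁻¹ = 1 := by rw [← ofP_mul]; simp [ofP_one]
  have hy : youngSym row' col' = ofP g * youngSym row col * ofP g⁻¹ := by
    rw [youngSym_eq, youngSym_eq, ← conj row row' (fun _ => 1) (fun _ => rfl) hr,
      ← conj col col' sgnC (fun s => by
        rw [sgnC_mul, sgnC_mul, sgnC_inv]
        rcases sgnC_pm g with h | h <;> rw [h] <;> ring) hc]
    calc _ = ofP g * chSum (stab col) sgnC * (ofP g⁻¹ * ofP g) * chSum (stab row) (fun _ => 1) *
          ofP g⁻¹ := by noncomm_ring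
      _ = _ := by rw [hg]; noncomm_ring
  let φ : GA N →ₗ[GA N] GA N := LinearMap.toSpanSingleton (GA N) (GA N) (ofP g⁻¹)
  have hφ : ∀ y, φ y = y * ofP g⁻¹ := fun y => by simp [φ, LinearMap.toSpanSingleton]
  have hφi : Function.Injective φ := by
    intro x y hxy
    rw [hφ, hφ] at hxy
    have := congrArg (· * ofP g) hxy
    simpa [mul_assoc, hg] using this
  have hmap : Submodule.map φ (SpechtIdeal row col) = SpechtIdeal row' col' := by
    rw [SpechtIdeal, SpechtIdeal, Ideal.span, Ideal.span, Submodule.map_span, Set.image_singleton, hφ, hy]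
    apply le_antisymm
    · rw [Submodule.span_singleton_le_iff_mem]
      refine Submodule.mem_span_singleton.2 ⟨ofP g⁻¹, ?_⟩
      rw [smul_eq_mul, ← mul_assoc, ← mul_assoc, hg, one_mul]
    · rw [Submodule.span_singleton_le_iff_mem]
      refine Submodule.mem_span_singleton.2 ⟨ofP g, ?_⟩
      rw [smul_eq_mul, ← mul_assoc]
  rw [← hmap]
  exact ⟨Submodule.equivMapOfInjective φ hφi _⟩

end part3
lemma exists_E {n : ℕ} (hn : 1 ≤ n) (e : GA (2 * n)) (he : e * e = e) (se : st e = e)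
    (c : ℂ) (hc : c ≠ 0) (hce : e = c • e0 n) (i : ℕ) :
    ∃ E : GA (2 * n), (∃ κ : ℂ, E = κ • (e * aT n i * bT n i * (bT n i * aT n i * e))) ∧
      E * E = E ∧ e * E = E ∧ E * e = E ∧ (¬ (Odd i ∧ i ≤ n) → E = 0) ∧
      (Odd i ∧ i ≤ n → E ≠ 0 ∧ Nonempty (↥(Ideal.span {E} : Ideal (GA (2 * n))) ≃ₗ[GA (2 * n)]
        ↥(SpechtIdeal (rowT n i) (colT n i)))) := by
  by_cases h : Odd i ∧ i ≤ n
  · have hne : bT n i * aT n i * e ≠ 0 := by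
      rw [hce, mul_smul_comm]
      exact smul_ne_zero hc (bae_ne hn h.2 h.1)
    obtain ⟨κ, E, h1, h2, h3, h4, h5, h6⟩ := abstract_piece (aT n i) (bT n i) e _
      (isChar_stab_one _).st (isChar_stab_sgn _).st se (isChar_stab_one _).mul_self he
      (aT_bT_one h.2) hne
    refine ⟨E, ⟨κ, h1⟩, h2, h4, h5, fun hh => absurd h hh, fun _ => ⟨h3, ?_⟩⟩
    rw [SpechtIdeal, youngSym_eq]
    exact h6
  · exact ⟨0, ⟨0, by simp⟩, by simp, by simp, by simp, fun _ => rfl, fun hh => absurd hh h⟩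

lemma aT_bT_orth {n i j : ℕ} (hi : i ≤ n) (hj : j ≤ n) (hij : i ≠ j) (x : GA (2 * n)) :
    bT n i * aT n i * x * (aT n j * bT n j) = 0 := by
  rcases lt_or_gt_of_ne hij with h | h
  · calc _ = bT n i * (aT n i * (x * aT n j) * bT n j) := by noncomm_ring
      _ = 0 := by rw [aT_bT_zero hj h, mul_zero]
  · have h1 := congrArg st (aT_bT_zero hi h (st (aT n i * x)))
    rw [st_mul, st_mul, st_st, st_zero, show st (aT n j) = aT n j from (isChar_stab_one _).st,
      show st (bT n i) = bT n i from (isChar_stab_sgn _).st] at h1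
    change bT n i * (aT n i * x * aT n j) = 0 at h1
    calc _ = bT n i * (aT n i * x * aT n j) * bT n j := by noncomm_ring
      _ = 0 := by rw [h1, zero_mul]

/-- the composition product `sgn₂[sgn_n]` decomposes into irreducibles as
the multiplicity-free direct sum of the Specht modules `S^{2^{n−i} 1^{2i}}` over all odd
`i` with `1 ≤ i ≤ n`. -/
theorem stmt11 (n : ℕ) (hn : 1 ≤ n) :
    ∃ U : ℕ → Submodule (GA (2 * n)) ↥(compProduct n),
      DirectSum.IsInternal U ∧
      (∀ i, Odd i → i ≤ n →
        ∀ row col : Fin (2 * n) → ℕ, IsTableau (hookishShape n i) row col →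
          Nonempty (↥(U i) ≃ₗ[GA (2 * n)] ↥(SpechtIdeal row col))) ∧
      (∀ i, ¬ (Odd i ∧ i ≤ n) → U i = ⊥) := by
  have hW := isChar_wreath hn
  have hc0 := hW.card_ne
  set c : ℂ := ((wreath n).card : ℂ) with hc
  have hee0 : e0 n * e0 n = c • e0 n := hW.mul_self
  obtain ⟨e, hedef⟩ : ∃ e, e = c⁻¹ • e0 n := ⟨_, rfl⟩
  have he : e * e = e := by
    rw [hedef, smul_mul_smul_comm, hee0, smul_smul]
    congr 1; field_simp
  have se : st e = e := by
    rw [hedef, st_smul, e0, hW.st]; simp [hc]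
  choose E hE1 hE2 hE3 hE4 hE5 hE6 using exists_E hn e he se c⁻¹ (inv_ne_zero hc0) hedef
  have horth : ∀ i j, i ≠ j → E i * E j = 0 := by
    intro i j hij
    by_cases hi : Odd i ∧ i ≤ n
    swap
    · rw [hE5 i hi, zero_mul]
    by_cases hj : Odd j ∧ j ≤ n
    swap
    · rw [hE5 j hj, mul_zero]
    obtain ⟨k, hk⟩ := hE1 i
    obtain ⟨l, hl⟩ := hE1 j
    rw [hk, hl, smul_mul_smul_comm]
    have : e * aT n i * bT n i * (bT n i * aT n i * e) * (e * aT n j * bT n j * (bT n j * aT n j * e))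
      = e * aT n i * bT n i * (bT n i * aT n i * (e * e) * (aT n j * bT n j)) * (bT n j * aT n j * e) := by
      noncomm_ring
    rw [this, aT_bT_orth hi.2 hj.2 hij]; simp
  obtain ⟨v, hv⟩ := span_bound hn
  have hsum : ∑ i : {i : Fin (n + 1) // Odd (i : ℕ)}, E i.1 = e := by
    refine sum_eq (fun i : {i : Fin (n + 1) // Odd (i : ℕ)} => E i.1) e v (fun i => hE2 _)
      (fun i => (hE6 _ ⟨i.2, by have := i.1.2; omega⟩).1)
      (fun i j hij => horth _ _ (fun h => hij (Subtype.ext (Fin.ext h)))) he (fun i => hE3 _)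
      (fun i => hE4 _) ?_ ?_
    · intro x
      rw [hedef, smul_mul_assoc, smul_mul_smul_comm]
      exact Submodule.smul_mem _ _ (hv x)
    · refine Fintype.card_le_of_injective
        (fun t : {t : Fin n // 2 * (t : ℕ) < n} =>
          (⟨⟨2 * (t.1 : ℕ) + 1, by have := t.2; omega⟩, ⟨_, rfl⟩⟩ : {i : Fin (n + 1) // Odd (i : ℕ)})) ?_
      intro s t hst
      have hst2 := congrArg (fun i : {i : Fin (n + 1) // Odd (i : ℕ)} => (i.1 : ℕ)) hst
      simp only at hst2
      exact Subtype.ext (Fin.ext (by omega))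
  have hcp : compProduct n = Ideal.span {e0 n} := rfl
  have hmem : ∀ x ∈ compProduct n, x * e = x := by
    intro x hx
    rw [hcp] at hx
    obtain ⟨w, rfl⟩ := Submodule.mem_span_singleton.1 hx
    rw [smul_eq_mul, mul_assoc, hedef, mul_smul_comm, hee0, smul_smul, inv_mul_cancel₀ hc0, one_smul]
  have hle : ∀ i, (Ideal.span {E i} : Ideal (GA (2 * n))) ≤ compProduct n := by
    intro i
    rw [hcp]
    refine (Submodule.span_singleton_le_iff_mem _ _).2 (Submodule.mem_span_singleton.2 ⟨c⁻¹ • E i, ?_⟩)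
    rw [smul_eq_mul, smul_mul_assoc, ← mul_smul_comm, ← hedef, hE4]
  let U : ℕ → Submodule (GA (2 * n)) ↥(compProduct n) := fun i =>
    Submodule.comap (compProduct n).subtype (Ideal.span {E i})
  have hU : ∀ i (x : compProduct n), x ∈ U i ↔ ∃ w, w * E i = x := by
    intro i x
    exact Submodule.mem_span_singleton
  refine ⟨U, ?_, ?_, ?_⟩
  · apply DirectSum.isInternal_submodule_of_iSupIndep_of_iSup_eq_top
    · rw [iSupIndep_def]
      intro i
      let φ : ↥(compProduct n) →ₗ[GA (2 * n)] GA (2 * n) :=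
        (LinearMap.toSpanSingleton (GA (2 * n)) (GA (2 * n)) (E i)).comp (compProduct n).subtype
      have hφ : ∀ y, φ y = (y : GA (2 * n)) * E i := fun y => by simp [φ, LinearMap.toSpanSingleton]
      have hker : (⨆ j, ⨆ (_ : j ≠ i), U j) ≤ LinearMap.ker φ := by
        refine iSup_le fun j => iSup_le fun hj => ?_
        intro x hx
        obtain ⟨w, hw⟩ := (hU j x).1 hx
        rw [LinearMap.mem_ker, hφ, ← hw, mul_assoc, horth _ _ hj, mul_zero]
      rw [Submodule.disjoint_def]
      intro x hx hx2
      have h1 := hker hx2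
      rw [LinearMap.mem_ker, hφ] at h1
      obtain ⟨w, hw⟩ := (hU i x).1 hx
      rw [← hw, mul_assoc, hE2, hw] at h1
      exact Subtype.ext h1
    · rw [eq_top_iff]
      intro x _
      have h1 : x = ∑ i : {i : Fin (n + 1) // Odd (i : ℕ)},
          (⟨(x : GA (2 * n)) * E i.1, hle _ (Submodule.mem_span_singleton.2 ⟨_, rfl⟩)⟩ : ↥(compProduct n)) := by
        ext1
        rw [AddSubmonoidClass.coe_finsetSum]
        simp only
        rw [← Finset.mul_sum, hsum, hmem _ x.2]
      rw [h1]
      refine Submodule.sum_mem _ fun i _ => ?_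
      exact Submodule.mem_iSup_of_mem (i.1 : ℕ) ((hU _ _).2 ⟨_, rfl⟩)
  · intro i hodd hi row col ht
    obtain ⟨f1⟩ := (hE6 i ⟨hodd, hi⟩).2
    obtain ⟨f2⟩ := specht_conj (isTableau_can n i hi) ht
    exact ⟨((Submodule.comapSubtypeEquivOfLe (hle i)).trans f1).trans f2⟩
  · intro i hi
    rw [eq_bot_iff]
    intro x hx
    obtain ⟨w, hw⟩ := (hU i x).1 hx
    rw [hE5 i hi, mul_zero] at hw
    exact Subtype.ext hw.symm
end
end

section
/- For all n ≥ 2, the dimension of the S_{3n−2}-module S^{3^{n−1}1} ⊕ S^{3^{n−2}21²} equals (4 / ((n+1)(n+2)(n+3))) · (3n)! / (n!)³. -/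
open Finset Equiv

noncomputable section
attribute [local instance] Classical.propDecidable

/-- The partition `3^{n−1} 1` of `3n − 2`. -/
def shapeA (n : ℕ) : ℕ → ℕ :=
  fun j => if j < n - 1 then 3 else if j = n - 1 then 1 else 0

/-- The partition `3^{n−2} 2 1²` of `3n − 2`. -/
def shapeB (n : ℕ) : ℕ → ℕ :=
  fun j => if j < n - 2 then 3 else if j = n - 2 then 2 else if j < n + 1 then 1 else 0

namespace SP

abbrev VV (N : ℕ) := (Fin N → Fin 3) → ℂ

def cnt {N : ℕ} (i : Fin 3) (w : Fin N → Fin 3) : ℕ := ∑ x, if w x = i then 1 else 0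

def op {N : ℕ} (i j : Fin 3) : VV N →ₗ[ℂ] VV N where
  toFun v := fun w => ∑ x, if w x = i then v (Function.update w x j) else 0
  map_add' u v := by
    funext w
    simp only [Pi.add_apply, ← Finset.sum_add_distrib]
    refine Finset.sum_congr rfl fun x _ => ?_
    split_ifs <;> simp
  map_smul' c v := by
    funext w
    simp only [Pi.smul_apply, smul_eq_mul, Finset.mul_sum, RingHom.id_apply]
    refine Finset.sum_congr rfl fun x _ => ?_
    split_ifs <;> simp

lemma op_apply {N : ℕ} (i j : Fin 3) (v : VV N) (w : Fin N → Fin 3) :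
    op i j v w = ∑ x, if w x = i then v (Function.update w x j) else 0 := rfl

def slice {N : ℕ} (k : Fin 3) : VV (N+1) →ₗ[ℂ] VV N where
  toFun v := fun w => v (Fin.cons k w)
  map_add' _ _ := rfl
  map_smul' _ _ := rfl

lemma slice_apply {N : ℕ} (k : Fin 3) (v : VV (N+1)) (w : Fin N → Fin 3) :
    slice k v w = v (Fin.cons k w) := rfl

lemma cnt_cons {N : ℕ} (i k : Fin 3) (w : Fin N → Fin 3) :
    cnt i (Fin.cons k w : Fin (N+1) → Fin 3) = (if k = i then 1 else 0) + cnt i w := by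
  rw [cnt, Fin.sum_univ_succ]; rfl

lemma slice_op {N : ℕ} (i j k : Fin 3) (v : VV (N+1)) :
    slice k (op i j v) = (if k = i then slice j v else 0) + op i j (slice k v) := by
  funext w
  simp only [slice_apply, op_apply, Fin.sum_univ_succ, Fin.cons_zero, Fin.cons_succ, Pi.add_apply]
  congr 1
  · split_ifs
    · simp [slice_apply, Fin.update_cons_zero]
    · rfl
  · refine Finset.sum_congr rfl fun x _ => ?_
    rw [← Fin.cons_update]

lemma comm {N : ℕ} (i j : Fin 3) (hij : i ≠ j) (v : VV N) (w : Fin N → Fin 3) :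
    op i j (op j i v) w = op j i (op i j v) w + ((cnt i w : ℂ) - cnt j w) * v w := by
  induction N with
  | zero => simp [op_apply, cnt]
  | succ N ih =>
    obtain ⟨k, w, rfl⟩ : ∃ k w', w = Fin.cons k w' := ⟨w 0, Fin.tail w, (Fin.cons_self_tail w).symm⟩
    rw [← slice_apply k (op i j (op j i v)), ← slice_apply k (op j i (op i j v)), ← slice_apply k v, slice_op, slice_op, slice_op, slice_op]
    rw [cnt_cons, cnt_cons]
    rcases eq_or_ne k i with h | h
    · subst h
      simp only [hij, if_true, if_false, Pi.add_apply, zero_add, slice_op, map_add, ih, Pi.zero_apply]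
      try simp only [hij.symm, if_false, Pi.zero_apply]
      push_cast; ring
    · rcases eq_or_ne k j with h' | h'
      · subst h'
        simp only [h, if_true, if_false, Pi.add_apply, zero_add, slice_op, map_add, ih, Pi.zero_apply]
        push_cast; ring
      · simp only [h, h', if_false, Pi.add_apply, zero_add, slice_op, ih, Pi.zero_apply]

lemma cnt_update_self {N : ℕ} (i : Fin 3) (w : Fin N → Fin 3) (x : Fin N) (h : w x ≠ i) :
    cnt i (Function.update w x i) = cnt i w + 1 := by
  unfold cnt
  rw [← Finset.add_sum_erase _ _ (Finset.mem_univ x), ← Finset.add_sum_erase _ _ (Finset.mem_univ x)]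
  simp only [Function.update_self, if_true, h, if_false]
  rw [zero_add, add_comm]; congr 1
  refine Finset.sum_congr rfl fun y hy => ?_
  rw [Function.update_of_ne (Finset.ne_of_mem_erase hy)]

lemma cnt_update_ne {N : ℕ} (i j : Fin 3) (hij : i ≠ j) (w : Fin N → Fin 3) (x : Fin N) (h : w x = j) :
    cnt j w = cnt j (Function.update w x i) + 1 := by
  unfold cnt
  rw [← Finset.add_sum_erase _ _ (Finset.mem_univ x), ← Finset.add_sum_erase _ _ (Finset.mem_univ x)]
  simp only [Function.update_self, if_true, h, if_false, hij]
  rw [zero_add, add_comm]; congr 1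
  refine Finset.sum_congr rfl fun y hy => ?_
  rw [Function.update_of_ne (Finset.ne_of_mem_erase hy)]

lemma supp_op {N : ℕ} (i j : Fin 3) (hij : i ≠ j) (v : VV N) (a b : ℕ)
    (hv : ∀ w, v w ≠ 0 → cnt i w = a ∧ cnt j w = b) (w) (hw : op j i v w ≠ 0) :
    cnt i w + 1 = a ∧ cnt j w = b + 1 := by
  rw [op_apply] at hw
  obtain ⟨x, -, hx⟩ := Finset.exists_ne_zero_of_sum_ne_zero hw
  split_ifs at hx with h
  · obtain ⟨h1, h2⟩ := hv _ hx
    rw [← h1, ← h2, cnt_update_self i w x (by rw [h]; exact hij.symm), cnt_update_ne i j hij w x h]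
    exact ⟨rfl, rfl⟩
  · exact absurd rfl hx

lemma vanish {N : ℕ} (i j : Fin 3) (hij : i ≠ j) (a : ℕ) : ∀ (b : ℕ) (μ : ℤ) (v : VV N),
    (∀ w, v w ≠ 0 → cnt i w = a ∧ cnt j w = b) → a < b → μ ≤ 0 →
    (op j i (op i j v) = (μ : ℂ) • v) → v = 0 := by
  have key : ∀ (a b : ℕ) (μ : ℤ) (v : VV N),
    (∀ w, v w ≠ 0 → cnt i w = a ∧ cnt j w = b) → a < b → μ ≤ 0 →
    (op j i (op i j v) = (μ : ℂ) • v) → op i j (op j i v) = ((μ + a - b : ℤ) : ℂ) • v := by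
    intro a b μ v hv hab hμ h
    funext w
    rw [comm i j hij, h]
    by_cases hw : v w = 0
    · simp [hw]
    · obtain ⟨h1, h2⟩ := hv w hw
      rw [h1, h2]; simp; ring
  have fin : ∀ (a b : ℕ) (μ : ℤ) (v : VV N),
    (∀ w, v w ≠ 0 → cnt i w = a ∧ cnt j w = b) → a < b → μ ≤ 0 →
    (op j i (op i j v) = (μ : ℂ) • v) → op j i v = 0 → v = 0 := by
    intro a b μ v hv hab hμ h h0
    have := key a b μ v hv hab hμ h
    rw [h0, map_zero] at this
    have h3 : ((μ + a - b : ℤ) : ℂ) ≠ 0 := by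
      rw [Int.cast_ne_zero]; omega
    exact (smul_eq_zero.mp this.symm).resolve_left h3
  induction a with
  | zero =>
    intro b μ v hv hab hμ h
    refine fin 0 b μ v hv hab hμ h ?_
    funext w
    by_contra hw
    have := supp_op i j hij v 0 b hv w hw
    omega
  | succ a ih =>
    intro b μ v hv hab hμ h
    refine fin _ b μ v hv hab hμ h ?_
    refine ih (b+1) (μ + (a+1 : ℕ) - b) _ ?_ (by omega) (by omega) ?_
    · intro w hw
      have := supp_op i j hij v _ b hv w hw
      omega
    · rw [key _ b μ v hv hab hμ h, map_smul]

def KK (N a b c : ℕ) : Submodule ℂ (VV N) where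
  carrier := {v | (∀ w, v w ≠ 0 → cnt 0 w = a ∧ cnt 1 w = b ∧ cnt 2 w = c) ∧
    op 0 1 v = 0 ∧ op 1 2 v = 0}
  zero_mem' := by simp
  add_mem' := by
    rintro u v ⟨h1, h2, h3⟩ ⟨k1, k2, k3⟩
    refine ⟨fun w hw => ?_, by rw [map_add, h2, k2, add_zero], by rw [map_add, h3, k3, add_zero]⟩
    by_cases h : u w = 0
    · exact k1 w (by simpa [h] using hw)
    · exact h1 w h
  smul_mem' := by
    rintro r v ⟨h1, h2, h3⟩
    refine ⟨fun w hw => h1 w ?_, by rw [map_smul, h2, smul_zero], by rw [map_smul, h3, smul_zero]⟩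
    intro h; simp [h] at hw

lemma mem_KK {N a b c : ℕ} {v : VV N} : v ∈ KK N a b c ↔
    (∀ w, v w ≠ 0 → cnt 0 w = a ∧ cnt 1 w = b ∧ cnt 2 w = c) ∧
    op 0 1 v = 0 ∧ op 1 2 v = 0 := Iff.rfl

lemma KK_bot1 {N a b c : ℕ} (h : a < b) : KK N a b c = ⊥ := by
  rw [Submodule.eq_bot_iff]
  rintro v ⟨h1, h2, h3⟩
  refine vanish 0 1 (by decide) a b 0 v (fun w hw => ⟨(h1 w hw).1, (h1 w hw).2.1⟩) h le_rfl ?_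
  rw [h2]; simp

lemma KK_bot2 {N a b c : ℕ} (h : b < c) : KK N a b c = ⊥ := by
  rw [Submodule.eq_bot_iff]
  rintro v ⟨h1, h2, h3⟩
  refine vanish 1 2 (by decide) b c 0 v (fun w hw => ⟨(h1 w hw).2.1, (h1 w hw).2.2⟩) h le_rfl ?_
  rw [h3]; simp

lemma finrank_split {N : ℕ} {U : Type*} [AddCommGroup U] [Module ℂ U] (W : Submodule ℂ (VV N))
    (f : VV N →ₗ[ℂ] U) :
    Module.finrank ℂ W = Module.finrank ℂ (W.map f) +
      Module.finrank ℂ ↥(W ⊓ LinearMap.ker f) := by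
  have := LinearMap.finrank_range_add_finrank_ker (f.domRestrict W)
  rw [← this, LinearMap.range_domRestrict, LinearMap.ker_domRestrict]
  congr 1
  have e := Submodule.equivSubtypeMap W ((LinearMap.ker f).comap W.subtype)
  rw [LinearEquiv.finrank_eq e, Submodule.map_comap_subtype]

lemma finrank_slices {N : ℕ} (W : Submodule ℂ (VV (N+1))) :
    Module.finrank ℂ W = Module.finrank ℂ (W.map (slice 2)) +
      (Module.finrank ℂ ((W ⊓ LinearMap.ker (slice 2)).map (slice 1)) +
      Module.finrank ℂ ((W ⊓ LinearMap.ker (slice 2) ⊓ LinearMap.ker (slice 1)).map (slice 0))) := by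
  rw [finrank_split W (slice 2), finrank_split (W ⊓ LinearMap.ker (slice 2)) (slice 1),
    finrank_split (W ⊓ LinearMap.ker (slice 2) ⊓ LinearMap.ker (slice 1)) (slice 0)]
  have : W ⊓ LinearMap.ker (slice 2) ⊓ LinearMap.ker (slice 1) ⊓ LinearMap.ker (slice 0) = ⊥ := by
    rw [Submodule.eq_bot_iff]
    rintro v ⟨⟨⟨-, h2⟩, h1⟩, h0⟩
    funext w
    obtain ⟨k, w, rfl⟩ : ∃ k w', w = Fin.cons k w' := ⟨w 0, Fin.tail w, (Fin.cons_self_tail w).symm⟩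
    have h2 : slice 2 v = 0 := h2
    have h1 : slice 1 v = 0 := h1
    have h0 : slice 0 v = 0 := h0
    have : slice k v = 0 := by fin_cases k <;> assumption
    exact congrFun this w
  rw [this, finrank_bot, add_zero]

def gg : ℕ → ℕ → ℕ → ℕ → ℕ
  | 0, _, _, _ => 1
  | N+1, c, p, q => (match c with | 0 => 0 | c+1 => gg N c (p+1) q) +
      ((match p with | 0 => 0 | p+1 => gg N c p (q+1)) +
      (match q with | 0 => 0 | q+1 => gg N c p q))

lemma gg_succ (N c p q : ℕ) : gg (N+1) c p q = (match c with | 0 => 0 | c+1 => gg N c (p+1) q) +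
      ((match p with | 0 => 0 | p+1 => gg N c p (q+1)) +
      (match q with | 0 => 0 | q+1 => gg N c p q)) := by
  cases c <;> cases p <;> cases q <;> rfl

open Nat in
lemma gg_formula (N : ℕ) : ∀ c p q, N = 3*c+2*p+q →
    gg N c p q * ((c+p+q+2)! * (c+p+1)! * c !) = (p+1)*(q+1)*(p+q+2)*N ! := by
  induction N with
  | zero =>
    intro c p q h
    obtain ⟨rfl, rfl, rfl⟩ : c = 0 ∧ p = 0 ∧ q = 0 := by omega
    simp [gg]
  | succ N ih =>
    intro c p q h
    have t1 : (match (generalizing := false) c with | 0 => 0 | c+1 => gg N c (p+1) q) * ((c+p+q+2)! * (c+p+1)! * c !) =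
      c * ((p+2)*(q+1)*(p+q+3)) * N ! := by
      cases c with
      | zero => simp
      | succ c =>
        have := ih c (p+1) q (by omega)
        simp only
        rw [show c+1+p+q+2 = c+(p+1)+q+2 by ring, show c+1+p+1 = c+(p+1)+1 by ring,
          Nat.factorial_succ c]
        linear_combination (c+1) * this
    have t2 : (match (generalizing := false) p with | 0 => 0 | p+1 => gg N c p (q+1)) * ((c+p+q+2)! * (c+p+1)! * c !) =
      (c+p+1) * (p*(q+2)*(p+q+2)) * N ! := by
      cases p with
      | zero => simp
      | succ p =>
        have := ih c p (q+1) (by omega)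
        simp only
        rw [show c+(p+1)+q+2 = c+p+(q+1)+2 by ring, Nat.factorial_succ (c+(p+1)),
          show c + (p+1) = c+p+1 by ring]
        linear_combination (c+p+2) * this
    have t3 : (match (generalizing := false) q with | 0 => 0 | q+1 => gg N c p q) * ((c+p+q+2)! * (c+p+1)! * c !) =
      (c+p+q+2) * ((p+1)*q*(p+q+1)) * N ! := by
      cases q with
      | zero => simp
      | succ q =>
        have := ih c p q (by omega)
        simp only
        rw [show c+p+(q+1)+2 = (c+p+q+2)+1 by ring, Nat.factorial_succ (c+p+q+2)]
        linear_combination (c+p+q+3) * this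
    rw [gg_succ, add_mul, add_mul, t1, t2, t3, Nat.factorial_succ, h]
    ring

lemma KK_le (N : ℕ) : ∀ c p q, N = 3*c+2*p+q →
    Module.finrank ℂ (KK N (c+p+q) (c+p) c) ≤ gg N c p q := by
  induction N with
  | zero =>
    intro c p q h
    refine (Submodule.finrank_le _).trans ?_
    simp [gg]
  | succ N ih =>
    intro c p q h
    have cn : ∀ (k : Fin 3) (w : Fin N → Fin 3) (v : VV (N+1)), v ∈ KK (N+1) (c+p+q) (c+p) c →
        slice k v w ≠ 0 → (if k = 0 then 1 else 0) + cnt 0 w = c+p+q ∧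
          (if k = 1 then 1 else 0) + cnt 1 w = c+p ∧ (if k = 2 then 1 else 0) + cnt 2 w = c := by
      intro k w v hv hw
      have := hv.1 _ hw
      simpa only [cnt_cons] using this
    rw [finrank_slices, gg_succ]
    refine add_le_add ?_ (add_le_add ?_ ?_)
    · cases c with
      | zero =>
        have : (KK (N+1) (0+p+q) (0+p) 0).map (slice 2) = ⊥ := by
          rw [Submodule.eq_bot_iff]
          rintro _ ⟨v, hv, rfl⟩
          funext w
          by_contra hw
          have := cn 2 w v hv hw
          simp at this
        rw [this]; simp
      | succ c =>
        refine le_trans (Submodule.finrank_mono ?_) (ih c (p+1) q (by omega))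
        rintro _ ⟨v, hv, rfl⟩
        refine ⟨fun w hw => ?_, ?_, ?_⟩
        · have := cn 2 w v hv hw
          simp at this; omega
        · have := slice_op 0 1 2 v
          rw [hv.2.1] at this
          simpa using this.symm
        · have := slice_op 1 2 2 v
          rw [hv.2.2] at this
          simpa using this.symm
    · have main : ∀ b', c + p = b' + 1 → (KK (N+1) (c+p+q) (c+p) c ⊓ LinearMap.ker (slice 2)).map (slice 1) ≤
          KK N (c+p+q) b' c := by
        rintro b' hb' _ ⟨v, ⟨hv, h2⟩, rfl⟩
        have h2 : slice 2 v = 0 := h2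
        refine ⟨fun w hw => ?_, ?_, ?_⟩
        · have := cn 1 w v hv hw
          simp at this; omega
        · have := slice_op 0 1 1 v
          rw [hv.2.1] at this
          simpa using this.symm
        · have := slice_op 1 2 1 v
          rw [hv.2.2] at this
          simpa [h2] using this.symm
      cases p with
      | zero =>
        have : (KK (N+1) (c+0+q) (c+0) c ⊓ LinearMap.ker (slice 2)).map (slice 1) = ⊥ := by
          cases c with
          | zero =>
            rw [Submodule.eq_bot_iff]
            rintro _ ⟨v, ⟨hv, -⟩, rfl⟩
            funext w
            by_contra hw
            have := cn 1 w v hv hw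
            simp at this
          | succ c =>
            rw [eq_bot_iff]
            refine (main c (by omega)).trans ?_
            rw [KK_bot2 (by omega)]
        rw [this]; simp
      | succ p =>
        refine le_trans (Submodule.finrank_mono (main (c+p) (by omega))) ?_
        have := ih c p (q+1) (by omega)
        rwa [show c + p + (q+1) = c + (p+1) + q by ring] at this
    · have main : ∀ a', c + p + q = a' + 1 → (KK (N+1) (c+p+q) (c+p) c ⊓ LinearMap.ker (slice 2) ⊓ LinearMap.ker (slice 1)).map (slice 0) ≤
          KK N a' (c+p) c := by
        rintro b' hb' _ ⟨v, ⟨⟨hv, h2⟩, h1⟩, rfl⟩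
        have h2 : slice 2 v = 0 := h2
        have h1 : slice 1 v = 0 := h1
        refine ⟨fun w hw => ?_, ?_, ?_⟩
        · have := cn 0 w v hv hw
          simp at this; omega
        · have := slice_op 0 1 0 v
          rw [hv.2.1] at this
          simpa [h1] using this.symm
        · have := slice_op 1 2 0 v
          rw [hv.2.2] at this
          simpa using this.symm
      cases q with
      | zero =>
        have : (KK (N+1) (c+p+0) (c+p) c ⊓ LinearMap.ker (slice 2) ⊓ LinearMap.ker (slice 1)).map (slice 0) = ⊥ := by
          rw [eq_bot_iff]
          refine (main (c+p-1) (by omega)).trans ?_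
          rw [KK_bot1 (by omega)]
        rw [this]; simp
      | succ q =>
        exact le_trans (Submodule.finrank_mono (main (c+p+q) (by omega))) (ih c p q (by omega))

def eT {N : ℕ} (row : Fin N → ℕ) (col : Fin N → Fin 3) : VV N := fun w =>
  ∑ a : Equiv.Perm (Fin N), if (∀ x, row (a x) = row x) ∧ w = (fun x => col (a x)) then sgnC a else 0

def shp (c p q : ℕ) : ℕ → ℕ :=
  fun j => if j < c then 3 else if j < c + p then 2 else if j < c + p + q then 1 else 0

def IsT {N : ℕ} (f : ℕ → ℕ) (row : Fin N → ℕ) (col : Fin N → Fin 3) : Prop :=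
  IsTableau f row (fun x => (col x : ℕ))

def SS (N : ℕ) (f : ℕ → ℕ) : Submodule ℂ (VV N) :=
  Submodule.span ℂ {v | ∃ row col, IsT f row col ∧ v = eT row col}

lemma IsT.inj {N : ℕ} {f : ℕ → ℕ} {row : Fin N → ℕ} {col : Fin N → Fin 3} (h : IsT f row col)
    {x y : Fin N} (h1 : row x = row y) (h2 : col x = col y) : x = y :=
  h.1 (by simp [h1, h2])

lemma IsT.lt {N : ℕ} {f : ℕ → ℕ} {row : Fin N → ℕ} {col : Fin N → Fin 3} (h : IsT f row col)
    (x : Fin N) : (col x : ℕ) < f (row x) := (h.2 _ _).1 ⟨x, rfl, rfl⟩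

lemma IsT.cons {N : ℕ} {f g : ℕ → ℕ} {row : Fin N → ℕ} {col : Fin N → Fin 3} (h : IsT f row col)
    (r : ℕ) (j : Fin 3) (h0 : f r = j) (hg : ∀ s, g s = if s = r then f s + 1 else f s) :
    IsT g (Fin.cons r row : Fin (N+1) → ℕ) (Fin.cons j col : Fin (N+1) → Fin 3) := by
  constructor
  · intro x y hxy
    simp only [Prod.mk.injEq] at hxy
    obtain ⟨h1, h2⟩ := hxy
    have h2 := Fin.ext h2
    have key : ∀ y : Fin N, r = row y → j = col y → False := by
      intro y h1 h2
      have := h.lt y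
      rw [← h1, h0, ← h2] at this
      exact lt_irrefl _ this
    induction x using Fin.cases with
    | zero =>
      induction y using Fin.cases with
      | zero => rfl
      | succ y => exact (key y (by simpa using h1) (by simpa using h2)).elim
    | succ x =>
      induction y using Fin.cases with
      | zero => exact (key x (by simpa using h1.symm) (by simpa using h2.symm)).elim
      | succ y => rw [h.inj (x := x) (y := y) (by simpa using h1) (by simpa using h2)]
  · intro s k
    rw [Fin.exists_fin_succ]
    simp only [Fin.cons_zero, Fin.cons_succ]
    rw [h.2 s k, hg]
    split_ifs with hs
    · subst hs; rw [h0]; constructor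
      · rintro (⟨-, h⟩ | h) <;> omega
      · intro h; rcases Nat.lt_succ_iff_lt_or_eq.mp h with h | h
        · exact Or.inr h
        · exact Or.inl ⟨rfl, h.symm⟩
    · constructor
      · rintro (⟨h, -⟩ | h)
        · exact absurd h.symm hs
        · exact h
      · exact Or.inr

lemma slice_eT_gt {N : ℕ} {f g : ℕ → ℕ} {row : Fin N → ℕ} {col : Fin N → Fin 3}
    (r : ℕ) (j : Fin 3) (h0 : f r = j) (hg : ∀ s, g s = if s = r then f s + 1 else f s)
    (h : IsT f row col) (k : Fin 3) (hk : j < k) :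
    slice k (eT (Fin.cons r row : Fin (N+1) → ℕ) (Fin.cons j col : Fin (N+1) → Fin 3)) = 0 := by
  have hT := h.cons r j h0 hg
  funext w
  rw [slice_apply, eT]
  refine Finset.sum_eq_zero fun a _ => if_neg ?_
  rintro ⟨h1, h2⟩
  have h1 := h1 0
  have h2 := congrFun h2 0
  simp only [Fin.cons_zero] at h1 h2
  have := hT.lt (a 0)
  rw [h1, ← h2, hg, if_pos rfl, h0] at this
  have := Fin.lt_def.mp hk
  omega

lemma slice_eT_eq {N : ℕ} {f g : ℕ → ℕ} {row : Fin N → ℕ} {col : Fin N → Fin 3}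
    (r : ℕ) (j : Fin 3) (h0 : f r = j) (hg : ∀ s, g s = if s = r then f s + 1 else f s)
    (h : IsT f row col) :
    slice j (eT (Fin.cons r row : Fin (N+1) → ℕ) (Fin.cons j col : Fin (N+1) → Fin 3)) =
      eT row col := by
  have hT := h.cons r j h0 hg
  funext w
  rw [slice_apply, eT, eT, ← Equiv.sum_comp (Equiv.Perm.decomposeFin.symm), Fintype.sum_prod_type,
    Finset.sum_eq_single_of_mem 0 (Finset.mem_univ _)]
  · refine Finset.sum_congr rfl fun e _ => ?_
    have hs : ∀ x : Fin N, Equiv.Perm.decomposeFin.symm ((0 : Fin (N+1)), e) x.succ = (e x).succ := by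
      intro x; rw [Equiv.Perm.decomposeFin_symm_apply_succ]; simp
    have hz : Equiv.Perm.decomposeFin.symm ((0 : Fin (N+1)), e) 0 = 0 := by simp
    have hsg : sgnC (Equiv.Perm.decomposeFin.symm ((0 : Fin (N+1)), e)) = sgnC e := by
      simp [sgnC]
    rw [hsg]
    refine if_congr ?_ rfl rfl
    rw [Fin.forall_fin_succ, hz, funext_iff, Fin.forall_fin_succ, hz, funext_iff]
    simp only [hs, Fin.cons_zero, Fin.cons_succ, true_and]
  · intro p _ hp
    refine Finset.sum_eq_zero fun e _ => if_neg ?_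
    rintro ⟨h1, h2⟩
    have h1 := h1 0
    have h2 := congrFun h2 0
    have hz : Equiv.Perm.decomposeFin.symm (p, e) 0 = p := by simp
    rw [hz] at h1 h2
    exact hp (hT.inj h1 (by simpa using h2.symm))

lemma SS_slice {N : ℕ} {f g : ℕ → ℕ} (r : ℕ) (j : Fin 3) (h0 : f r = j)
    (hg : ∀ s, g s = if s = r then f s + 1 else f s) (v : VV N)
    (hv : v ∈ {v | ∃ row col, IsT f row col ∧ v = eT row col}) :
    ∃ u ∈ SS (N+1) g, (∀ k, j < k → u ∈ LinearMap.ker (slice (N := N) k)) ∧ slice j u = v := by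
  obtain ⟨row, col, h, rfl⟩ := hv
  exact ⟨_, Submodule.subset_span ⟨_, _, h.cons r j h0 hg, rfl⟩,
    fun k hk => slice_eT_gt r j h0 hg h k hk, slice_eT_eq r j h0 hg h⟩

lemma SS_ge (N : ℕ) : ∀ c p q, N = 3*c+2*p+q →
    gg N c p q ≤ Module.finrank ℂ (SS N (shp c p q)) := by
  induction N with
  | zero =>
    intro c p q h
    obtain ⟨rfl, rfl, rfl⟩ : c = 0 ∧ p = 0 ∧ q = 0 := by omega
    have h1 : eT (N := 0) (fun _ => 0) (fun _ => 0) ∈ SS 0 (shp 0 0 0) := by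
      refine Submodule.subset_span ⟨_, _, ⟨fun x => x.elim0, fun r c => ?_⟩, rfl⟩
      simp [shp]
    have h2 : eT (N := 0) (fun _ => 0) (fun _ => 0) ≠ 0 := by
      intro h
      have := congrFun h (fun _ => 0)
      simp [eT, sgnC] at this
    rw [gg, Nat.succ_le_iff, Module.finrank_pos_iff_exists_ne_zero]
    exact ⟨⟨_, h1⟩, fun h => h2 (by simpa using h)⟩
  | succ N ih =>
    intro c p q h
    rw [finrank_slices, gg_succ]
    refine add_le_add ?_ (add_le_add ?_ ?_)
    · cases c with
      | zero => simp
      | succ c =>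
        refine (ih c (p+1) q (by omega)).trans (Submodule.finrank_mono (Submodule.span_le.2 ?_))
        intro v hv
        obtain ⟨u, hu, -, h2⟩ := SS_slice (g := shp (c+1) p q) c 2 (by simp [shp])
          (by intro s; simp only [shp]; split_ifs <;> omega) v hv
        exact ⟨u, hu, h2⟩
    · cases p with
      | zero => simp
      | succ p =>
        refine (ih c p (q+1) (by omega)).trans (Submodule.finrank_mono (Submodule.span_le.2 ?_))
        intro v hv
        obtain ⟨u, hu, h1, h2⟩ := SS_slice (g := shp c (p+1) q) (c+p) 1 (by simp [shp])
          (by intro s; simp only [shp]; split_ifs <;> omega) v hv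
        exact ⟨u, ⟨hu, h1 2 (by decide)⟩, h2⟩
    · cases q with
      | zero => simp
      | succ q =>
        refine (ih c p q (by omega)).trans (Submodule.finrank_mono (Submodule.span_le.2 ?_))
        intro v hv
        obtain ⟨u, hu, h1, h2⟩ := SS_slice (g := shp c p (q+1)) (c+p+q) 0 (by simp [shp]; omega)
          (by intro s; simp only [shp]; split_ifs <;> omega) v hv
        exact ⟨u, ⟨⟨hu, h1 2 (by decide)⟩, h1 1 (by decide)⟩, h2⟩

lemma eT_supp {N : ℕ} (row : Fin N → ℕ) (col : Fin N → Fin 3) (w) (h : eT row col w ≠ 0) :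
    ∃ a : Equiv.Perm (Fin N), w = fun x => col (a x) := by
  obtain ⟨a, -, ha⟩ := Finset.exists_ne_zero_of_sum_ne_zero h
  by_contra hc
  exact ha (if_neg fun h => hc ⟨a, h.2⟩)

lemma cnt_perm {N : ℕ} (i : Fin 3) (col : Fin N → Fin 3) (a : Equiv.Perm (Fin N)) :
    cnt i (fun x => col (a x)) = cnt i col :=
  Equiv.sum_comp a (fun x => if col x = i then 1 else 0)

lemma cnt_tab {N : ℕ} {f : ℕ → ℕ} {row : Fin N → ℕ} {col : Fin N → Fin 3} (h : IsT f row col)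
    (i : Fin 3) (m : ℕ) (hm : ∀ r, (i : ℕ) < f r ↔ r < m) : cnt i col = m := by
  rw [cnt, ← Finset.card_filter]
  rw [← Finset.card_range m]
  refine Finset.card_bij (fun x _ => row x) ?_ ?_ ?_
  · intro x hx
    have := h.lt x
    rw [(Finset.mem_filter.1 hx).2] at this
    exact Finset.mem_range.2 ((hm _).1 this)
  · intro x hx y hy hxy
    exact h.inj hxy ((Finset.mem_filter.1 hx).2.trans (Finset.mem_filter.1 hy).2.symm)
  · intro r hr
    obtain ⟨x, h1, h2⟩ := (h.2 r i).2 ((hm r).2 (Finset.mem_range.1 hr))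
    exact ⟨x, Finset.mem_filter.2 ⟨Finset.mem_univ _, Fin.ext h2⟩, h1⟩

lemma op_eT {N : ℕ} {f : ℕ → ℕ} {row : Fin N → ℕ} {col : Fin N → Fin 3} (h : IsT f row col)
    (i j : Fin 3) (hij : i < j) : op i j (eT row col) = 0 := by
  funext w
  -- cell to the left
  have ex : ∀ x : Fin N, ∃ y : Fin N, col x = j → row y = row x ∧ col y = i := by
    intro x
    by_cases hx : col x = j
    · have h1 := h.lt x
      rw [hx] at h1
      obtain ⟨y, h2, h3⟩ := (h.2 (row x) i).2 (lt_trans (Fin.lt_def.1 hij) h1)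
      exact ⟨y, fun _ => ⟨h2, Fin.ext h3⟩⟩
    · exact ⟨x, fun h => absurd h hx⟩
  choose L hL using ex
  let P : Fin N × Equiv.Perm (Fin N) → Prop := fun z => w z.1 = i ∧
    (∀ x, row (z.2 x) = row x) ∧ Function.update w z.1 j = fun x => col (z.2 x)
  have step : op i j (eT row col) w = ∑ z ∈ Finset.univ.filter P, sgnC z.2 := by
    rw [op_apply, Finset.sum_filter, Fintype.sum_prod_type]
    refine Finset.sum_congr rfl fun x _ => ?_
    by_cases hx : w x = i
    · simp only [hx, if_true, eT, true_and]
    · simp [hx]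
  rw [step]
  let Y : Fin N × Equiv.Perm (Fin N) → Fin N := fun z => z.2.symm (L (z.2 z.1))
  let inv : Fin N × Equiv.Perm (Fin N) → Fin N × Equiv.Perm (Fin N) := fun z =>
    (Y z, z.2 * Equiv.swap z.1 (Y z))
  have cx : ∀ z, P z → col (z.2 z.1) = j := by
    rintro ⟨x, a⟩ ⟨-, -, h3⟩
    have := congrFun h3 x
    simpa using this.symm
  have ne : ∀ z, P z → Y z ≠ z.1 := by
    intro z hz he
    have h1 := cx z hz
    have h2 := (hL _ h1).2
    have : L (z.2 z.1) = z.2 z.1 := (Equiv.symm_apply_eq _).1 he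
    rw [this, h1] at h2
    exact hij.ne' h2
  have cy : ∀ z, P z → col (z.2 (Y z)) = i := by
    intro z hz
    simp only [Y, Equiv.apply_symm_apply]
    exact (hL _ (cx z hz)).2
  have ry : ∀ z, P z → row (Y z) = row z.1 := by
    intro z hz
    rw [← hz.2.1 (Y z), ← hz.2.1 z.1]
    simp only [Y, Equiv.apply_symm_apply]
    exact (hL _ (cx z hz)).1
  have wy : ∀ z, P z → w (Y z) = i := by
    intro z hz
    have := congrFun hz.2.2 (Y z)
    rw [Function.update_of_ne (ne z hz), cy z hz] at this
    exact this
  refine Finset.sum_involution (fun z _ => inv z) ?_ ?_ ?_ ?_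
  · intro z hz
    have hz := (Finset.mem_filter.1 hz).2
    simp [inv, sgnC, Equiv.Perm.sign_swap (ne z hz).symm]
  · intro z hz _ he
    have hz := (Finset.mem_filter.1 hz).2
    exact ne z hz (congrArg Prod.fst he)
  · intro z hz
    have hz := (Finset.mem_filter.1 hz).2
    refine Finset.mem_filter.2 ⟨Finset.mem_univ _, wy z hz, ?_, ?_⟩
    · intro x
      simp only [inv, Equiv.Perm.mul_apply]
      rw [hz.2.1]
      rcases eq_or_ne x z.1 with rfl | h1
      · rw [Equiv.swap_apply_left, ry z hz]
      · rcases eq_or_ne x (Y z) with rfl | h2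
        · rw [Equiv.swap_apply_right, ry z hz]
        · rw [Equiv.swap_apply_of_ne_of_ne h1 h2]
    · funext x
      simp only [inv, Equiv.Perm.mul_apply]
      rcases eq_or_ne x z.1 with rfl | h1
      · rw [Equiv.swap_apply_left, cy z hz, Function.update_of_ne (ne z hz).symm, hz.1]
      · rcases eq_or_ne x (Y z) with rfl | h2
        · rw [Equiv.swap_apply_right, cx z hz, Function.update_self]
        · rw [Equiv.swap_apply_of_ne_of_ne h1 h2, Function.update_of_ne h2]
          have := congrFun hz.2.2 x
          rwa [Function.update_of_ne h1] at this
  · intro z hz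
    have hz := (Finset.mem_filter.1 hz).2
    have hY : Y (inv z) = z.1 := by
      have c1 : col (z.2 z.1) = j := cx z hz
      simp only [Y, inv]
      rw [Equiv.symm_apply_eq]
      simp only [Equiv.Perm.mul_apply, Equiv.swap_apply_left]
      rw [show z.2 (Equiv.swap z.1 (z.2.symm (L (z.2 z.1))) (z.2.symm (L (z.2 z.1)))) = z.2 z.1 by
        rw [Equiv.swap_apply_right]]
      simp
    refine Prod.ext hY ?_
    show z.2 * Equiv.swap z.1 (Y z) * Equiv.swap (Y z) (Y (inv z)) = z.2
    rw [hY, Equiv.swap_comm (Y z), mul_assoc, Equiv.swap_mul_self, mul_one]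

lemma SS_le_KK (N c p q : ℕ) : SS N (shp c p q) ≤ KK N (c+p+q) (c+p) c := by
  refine Submodule.span_le.2 ?_
  rintro _ ⟨row, col, h, rfl⟩
  refine ⟨fun w hw => ?_, op_eT h 0 1 (by decide), op_eT h 1 2 (by decide)⟩
  obtain ⟨a, rfl⟩ := eT_supp row col w hw
  rw [cnt_perm, cnt_perm, cnt_perm]
  refine ⟨cnt_tab h _ _ ?_, cnt_tab h _ _ ?_, cnt_tab h _ _ ?_⟩ <;>
  · intro r; simp only [shp, Fin.val_zero, Fin.val_one, Fin.val_two]; split_ifs <;> omega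

lemma finrank_SS (N c p q : ℕ) (h : N = 3*c+2*p+q) :
    Module.finrank ℂ (SS N (shp c p q)) = gg N c p q :=
  le_antisymm ((Submodule.finrank_mono (SS_le_KK N c p q)).trans (KK_le N c p q h)) (SS_ge N c p q h)

lemma sgnC_mul {N : ℕ} (a b : Equiv.Perm (Fin N)) : sgnC (a * b) = sgnC a * sgnC b := by
  simp [sgnC]

lemma sgnC_inv {N : ℕ} (a : Equiv.Perm (Fin N)) : sgnC a⁻¹ = sgnC a := by
  simp [sgnC]

lemma sgnC_sq {N : ℕ} (a : Equiv.Perm (Fin N)) : sgnC a * sgnC a = 1 := by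
  rw [← sgnC_inv a, ← sgnC_inv a⁻¹, ← sgnC_mul]; simp [sgnC]

lemma colpart {N : ℕ} (col : Fin N → ℕ) (h : Equiv.Perm (Fin N)) :
    (∑ σ ∈ stab col, sgnC σ • ofP σ : GA N).coeff h = if h ∈ stab col then sgnC h else 0 := by
  rw [MonoidAlgebra.coeff_sum, Finsupp.finsetSum_apply]
  simp only [MonoidAlgebra.coeff_smul_apply, ofP, MonoidAlgebra.of_apply, MonoidAlgebra.coeff_single,
    Finsupp.single_apply, smul_eq_mul, mul_ite, mul_one, mul_zero]
  rw [Finset.sum_ite_eq']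

lemma young_coeff {N : ℕ} (row : Fin N → ℕ) (col : Fin N → Fin 3) (g : Equiv.Perm (Fin N)) :
    (youngSym row (fun x => (col x : ℕ))).coeff g = sgnC g * eT row col (fun x => col (g x)) := by
  rw [youngSym, Finset.mul_sum, MonoidAlgebra.coeff_sum, Finsupp.finsetSum_apply, eT,
    Finset.mul_sum, stab, Finset.sum_filter]
  refine Finset.sum_congr rfl fun r _ => ?_
  by_cases hr : ∀ x, row (r x) = row x
  · simp only [hr, implies_true, if_true, true_and]
    rw [ofP, MonoidAlgebra.of_apply, MonoidAlgebra.coeff_mul_single_apply, colpart, mul_one]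
    have : g * r⁻¹ ∈ stab (fun x => (col x : ℕ)) ↔ (fun x => col (g x)) = fun x => col (r x) := by
      simp only [stab, Finset.mem_filter, Finset.mem_univ, true_and, Equiv.Perm.mul_apply]
      constructor
      · intro h
        funext x
        have := h (r x)
        have e : r⁻¹ (r x) = x := r.symm_apply_apply x
        rw [e] at this
        exact Fin.ext this
      · intro h x
        have := congrFun h (r⁻¹ x)
        have e : r (r⁻¹ x) = x := r.apply_symm_apply x
        simp only [e] at this
        rw [this]
    by_cases h : (fun x => col (g x)) = fun x => col (r x)
    · rw [if_pos (this.2 h), if_pos h, sgnC_mul, sgnC_inv]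
    · rw [if_neg (fun h' => h (this.1 h')), if_neg h, mul_zero]
  · simp [hr]

lemma eT_perm {N : ℕ} (row : Fin N → ℕ) (col : Fin N → Fin 3) (σ : Equiv.Perm (Fin N))
    (w : Fin N → Fin 3) :
    eT (fun x => row (σ x)) (fun x => col (σ x)) w = eT row col (fun x => w (σ⁻¹ x)) := by
  rw [eT, eT, ← Equiv.sum_comp (MulAut.conj σ⁻¹).toEquiv]
  refine Finset.sum_congr rfl fun a _ => ?_
  have hs : sgnC ((MulAut.conj σ⁻¹).toEquiv a) = sgnC a := by
    simp only [MulEquiv.toEquiv_eq_coe, MulEquiv.coe_toEquiv, MulAut.conj_apply, sgnC_mul, sgnC_inv]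
    rw [mul_right_comm, sgnC_sq, one_mul]
  rw [hs]
  refine if_congr ?_ rfl rfl
  have e : ∀ x, σ (σ⁻¹ x) = x := fun x => σ.apply_symm_apply x
  simp only [MulEquiv.toEquiv_eq_coe, MulEquiv.coe_toEquiv, MulAut.conj_apply, inv_inv,
    Equiv.Perm.mul_apply, e]
  refine and_congr ⟨fun h x => ?_, fun h x => h _⟩ ⟨fun h => ?_, fun h => ?_⟩
  · have := h (σ⁻¹ x)
    simpa using this
  · rw [h]; funext x; simp
  · funext x
    have := congrFun h (σ x)
    simpa using this

lemma IsT.perm {N : ℕ} {f : ℕ → ℕ} {row : Fin N → ℕ} {col : Fin N → Fin 3} (h : IsT f row col)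
    (σ : Equiv.Perm (Fin N)) : IsT f (fun x => row (σ x)) (fun x => col (σ x)) := by
  refine ⟨fun x y hxy => ?_, fun r c => ?_⟩
  · simp only [Prod.mk.injEq] at hxy
    exact σ.injective (h.inj hxy.1 (Fin.ext hxy.2))
  · rw [← h.2 r c]
    constructor
    · rintro ⟨x, hx⟩; exact ⟨σ x, hx⟩
    · rintro ⟨x, hx⟩; exact ⟨σ⁻¹ x, by simpa using hx⟩

lemma IsT.exists_perm {N : ℕ} {f : ℕ → ℕ} {row row' : Fin N → ℕ} {col col' : Fin N → Fin 3}
    (h : IsT f row col) (h' : IsT f row' col') :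
    ∃ σ : Equiv.Perm (Fin N), row' = (fun x => row (σ x)) ∧ col' = fun x => col (σ x) := by
  have ex : ∀ x, ∃ y, row y = row' x ∧ (col y : ℕ) = col' x := fun x =>
    (h.2 _ _).2 (h'.lt x)
  choose s hs using ex
  have inj : Function.Injective s := by
    intro x y hxy
    refine h'.inj ?_ (Fin.ext ?_)
    · rw [← (hs x).1, ← (hs y).1, hxy]
    · rw [← (hs x).2, ← (hs y).2, hxy]
  refine ⟨Equiv.ofBijective s (Finite.injective_iff_bijective.1 inj), ?_, ?_⟩
  · funext x; exact (hs x).1.symm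
  · funext x; exact (Fin.ext (hs x).2).symm

lemma SS_eq {N : ℕ} {f : ℕ → ℕ} {row : Fin N → ℕ} {col : Fin N → Fin 3} (h : IsT f row col) :
    SS N f = Submodule.span ℂ (Set.range fun τ : Equiv.Perm (Fin N) =>
      (fun w => eT row col (fun x => w (τ x)) : VV N)) := by
  rw [SS]; congr 1
  ext v
  constructor
  · rintro ⟨row', col', h', rfl⟩
    obtain ⟨σ, rfl, rfl⟩ := h.exists_perm h'
    exact ⟨σ⁻¹, by funext w; rw [eT_perm]⟩
  · rintro ⟨τ, rfl⟩
    refine ⟨_, _, h.perm τ⁻¹, ?_⟩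
    funext w; rw [eT_perm, inv_inv]

def phi {N : ℕ} (col : Fin N → Fin 3) : VV N →ₗ[ℂ] (Equiv.Perm (Fin N) → ℂ) where
  toFun v := fun σ => v (fun x => col (σ⁻¹ x))
  map_add' _ _ := rfl
  map_smul' _ _ := rfl

lemma finrank_phi {N : ℕ} {f : ℕ → ℕ} {row : Fin N → ℕ} {col : Fin N → Fin 3} (h : IsT f row col) :
    Module.finrank ℂ ((SS N f).map (phi col)) = Module.finrank ℂ (SS N f) := by
  rw [finrank_split (SS N f) (phi col)]
  suffices SS N f ⊓ LinearMap.ker (phi col) = ⊥ by rw [this, finrank_bot, add_zero]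
  rw [Submodule.eq_bot_iff]
  rintro v ⟨hv, hk⟩
  have supp : ∀ w, (∀ σ : Equiv.Perm (Fin N), w ≠ fun x => col (σ⁻¹ x)) → v w = 0 := by
    intro w hw
    have : SS N f ≤ LinearMap.ker (LinearMap.proj (R := ℂ) (φ := fun _ : Fin N → Fin 3 => ℂ) w) := by
      refine Submodule.span_le.2 ?_
      rintro _ ⟨row', col', h', rfl⟩
      obtain ⟨σ, rfl, rfl⟩ := h.exists_perm h'
      refine LinearMap.mem_ker.2 ?_
      rw [LinearMap.proj_apply]
      by_contra hne
      obtain ⟨a, ha⟩ := eT_supp _ _ _ hne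
      exact hw (σ * a)⁻¹ (by rw [ha]; simp)
    exact this hv
  funext w
  by_cases hw : ∃ σ : Equiv.Perm (Fin N), w = fun x => col (σ⁻¹ x)
  · obtain ⟨σ, rfl⟩ := hw
    exact congrFun (show phi col v = 0 from hk) σ
  · push Not at hw
    exact supp w hw

def cf (N : ℕ) : GA N →ₗ[ℂ] (Equiv.Perm (Fin N) → ℂ) where
  toFun v := fun σ => v.coeff σ
  map_add' _ _ := rfl
  map_smul' _ _ := rfl

lemma cf_inj (N : ℕ) : Function.Injective (cf N) := by
  intro u v h
  apply MonoidAlgebra.coeff_injective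
  ext σ
  exact congrFun h σ

lemma ideal_eq {N : ℕ} (y : GA N) : (Ideal.span {y}).restrictScalars ℂ =
    Submodule.span ℂ (Set.range fun σ : Equiv.Perm (Fin N) => ofP σ * y) := by
  apply le_antisymm
  · intro z hz
    obtain ⟨a, rfl⟩ := Ideal.mem_span_singleton'.1 hz
    induction a using MonoidAlgebra.induction_on with
    | of g => exact Submodule.subset_span ⟨g, rfl⟩
    | add f g hf hg =>
      rw [add_mul]
      exact Submodule.add_mem _ (hf (Ideal.mem_span_singleton'.2 ⟨f, rfl⟩))
        (hg (Ideal.mem_span_singleton'.2 ⟨g, rfl⟩))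
    | smul r f hf =>
      rw [smul_mul_assoc]
      exact Submodule.smul_mem _ _ (hf (Ideal.mem_span_singleton'.2 ⟨f, rfl⟩))
  · refine Submodule.span_le.2 ?_
    rintro _ ⟨σ, rfl⟩
    exact Ideal.mem_span_singleton'.2 ⟨_, rfl⟩

lemma finrank_specht {N : ℕ} {f : ℕ → ℕ} {row : Fin N → ℕ} {col : Fin N → Fin 3}
    (h : IsT f row col) :
    Module.finrank ℂ ↥((SpechtIdeal row (fun x => (col x : ℕ))).restrictScalars ℂ) =
      Module.finrank ℂ (SS N f) := by
  set y := youngSym row (fun x => (col x : ℕ)) with hy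
  let M : Matrix (Equiv.Perm (Fin N)) (Equiv.Perm (Fin N)) ℂ := fun σ τ => y.coeff (σ⁻¹ * τ)
  let D : Matrix (Equiv.Perm (Fin N)) (Equiv.Perm (Fin N)) ℂ := Matrix.diagonal sgnC
  have hD : IsUnit D.det := by
    rw [Matrix.det_diagonal, isUnit_iff_ne_zero, Finset.prod_ne_zero_iff]
    intro a _ ha
    have := sgnC_sq a
    rw [ha] at this; simp at this
  have h1 : M.rank = Module.finrank ℂ ↥((SpechtIdeal row (fun x => (col x : ℕ))).restrictScalars ℂ) := by
    rw [SpechtIdeal, ideal_eq, Matrix.rank_eq_finrank_span_row,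
      LinearEquiv.finrank_eq (Submodule.equivMapOfInjective (cf N) (cf_inj N) (Submodule.span ℂ _)), Submodule.map_span, ← Set.range_comp]
    suffices hh : M.row = (cf N ∘ fun σ : Equiv.Perm (Fin N) =>
        ofP σ * youngSym row (fun x => (col x : ℕ))) by rw [hh]
    funext σ τ
    show y.coeff (σ⁻¹ * τ) = (ofP σ * y).coeff τ
    simp [ofP]
  have h2 : (D * M.transpose * D).rank = M.rank := by
    rw [Matrix.rank_mul_eq_left_of_isUnit_det _ _ hD, Matrix.rank_mul_eq_right_of_isUnit_det _ _ hD,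
      Matrix.rank_transpose]
  rw [← h1, ← h2, Matrix.rank_eq_finrank_span_row, ← finrank_phi h, SS_eq h, Submodule.map_span,
    ← Set.range_comp]
  suffices hh : (D * M.transpose * D).row = (phi col ∘ fun (τ : Equiv.Perm (Fin N)) w =>
      eT row col fun x => w (τ x)) by rw [hh]
  funext τ σ
  have e : (D * M.transpose * D).row τ σ = sgnC τ * y.coeff (σ⁻¹ * τ) * sgnC σ := by
    simp only [Matrix.row, D]
    rw [Matrix.mul_diagonal, Matrix.diagonal_mul]; rfl
  rw [e, hy, young_coeff, sgnC_mul, sgnC_inv]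
  show _ = eT row col fun x => col (σ⁻¹ (τ x))
  simp only [Equiv.Perm.mul_apply]
  linear_combination (sgnC τ * sgnC τ * eT row col fun x => col (σ⁻¹ (τ x))) * sgnC_sq σ +
    (eT row col fun x => col (σ⁻¹ (τ x))) * sgnC_sq τ

lemma finrank_main {N : ℕ} (c p q : ℕ) (hN : N = 3*c+2*p+q) (row col : Fin N → ℕ)
    (h : IsTableau (shp c p q) row col) :
    Module.finrank ℂ ↥((SpechtIdeal row col).restrictScalars ℂ) = gg N c p q := by
  have hc : ∀ x, col x < 3 := by
    intro x
    have : col x < shp c p q (row x) := (h.2 _ _).1 ⟨x, rfl, rfl⟩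
    refine this.trans_le ?_
    simp only [shp]; split_ifs <;> omega
  have := finrank_specht (f := shp c p q) (row := row) (col := fun x => ⟨col x, hc x⟩) h
  rw [finrank_SS N c p q hN] at this
  exact this

end SP

/-- for all `n ≥ 2`, the dimension of the `S_{3n−2}`-module
`S^{3^{n−1}1} ⊕ S^{3^{n−2}21²}` equals `(4 / ((n+1)(n+2)(n+3))) · (3n)! / (n!)³`
(stated with denominators cleared). -/
theorem stmt12 (n : ℕ) (hn : 2 ≤ n)
    (rowa cola rowb colb : Fin (3 * n - 2) → ℕ)
    (ha : IsTableau (shapeA n) rowa cola) (hb : IsTableau (shapeB n) rowb colb) :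
    (Module.finrank ℂ ↥((SpechtIdeal rowa cola).restrictScalars ℂ) +
        Module.finrank ℂ ↥((SpechtIdeal rowb colb).restrictScalars ℂ)) *
      ((n + 1) * (n + 2) * (n + 3)) * (Nat.factorial n) ^ 3 =
    4 * Nat.factorial (3 * n) := by
  obtain ⟨m, rfl⟩ : ∃ m, n = m + 2 := ⟨n - 2, by omega⟩
  have eA : shapeA (m+2) = SP.shp (m+1) 0 1 := by
    funext j; simp only [shapeA, SP.shp]; split_ifs <;> omega
  have eB : shapeB (m+2) = SP.shp m 1 2 := by
    funext j; simp only [shapeB, SP.shp]; split_ifs <;> omega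
  rw [eA] at ha
  rw [eB] at hb
  rw [SP.finrank_main _ _ _ (by omega) _ _ ha, SP.finrank_main _ _ _ (by omega) _ _ hb]
  have fA := SP.gg_formula (3*(m+2)-2) (m+1) 0 1 (by omega)
  have fB := SP.gg_formula (3*(m+2)-2) m 1 2 (by omega)
  have hN : 3*(m+2)-2 = 3*m+4 := by omega
  rw [hN] at fA fB ⊢
  rw [show 3*(m+2) = 3*m+4+1+1 by ring, Nat.factorial_succ (3*m+4+1), Nat.factorial_succ (3*m+4)]
  generalize SP.gg (3*m+4) (m+1) 0 1 = A at *
  generalize SP.gg (3*m+4) m 1 2 = B at *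
  generalize (3*m+4).factorial = M at *
  simp only [add_zero, show m+1+1+2 = m+1+1+1+1 by ring, show m+1+2+2=m+1+1+1+1+1 by ring, show m+2=m+1+1 by ring,
    Nat.factorial_succ] at fA fB ⊢
  generalize m.factorial = F at *
  linear_combination (m+2)*(m+5) * fA + (m+2)*(m+1) * fB
end
end
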